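/- arXiv:1507.03627 — 4 statements merged into one kernel-verified Lean document; each statement's English description precedes it below -/
import Mathlib

section
/- Let a ∈ (0,1] and let θ ∈ C¹([0,∞)) be such that the support of θ' is compact in ℝ and θ' is not identically zero. Then there exists a constant c > 0 such that for every continuously differentiable function u with compact support in Ω one has ∫_Ω |∇u(x)|² dx − (1/(4a²)) ∫_Ω |u(x)|²/|x|² dx ≥ c ∫_Ω |u(x)|²/(1 + |x|² (log|x|)²) dx. -/
open MeasureTheory Real Set

noncomputable section

/-- The curved wedge of opening angle `2πa` with twisting function `θ`. -/
def curvedWedge (a : ℝ) (θ : ℝ → ℝ) : Set (ℝ × ℝ) :=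
  {x | ∃ r ∈ Ioi (0:ℝ), ∃ φ ∈ Ioo (0:ℝ) (2 * π * a),
    x = (r * Real.cos (φ + θ r), r * Real.sin (φ + θ r))}

/-- The Euclidean norm on `ℝ × ℝ`. -/
def enorm2 (x : ℝ × ℝ) : ℝ := Real.sqrt (x.1 ^ 2 + x.2 ^ 2)

/-!
In logarithmic polar coordinates `t = log r`, `y` = angle, the Dirichlet energy is invariant and
the wedge becomes the strip `ϑ t < y < ϑ t + b`, where `ϑ = θ ∘ exp` and `b = 2πa`; its transverse
ground state `sin (π / b * (y - ϑ t))` accounts for the constant `(π / b)² = 1 / (4a²)`. Completing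
a square shows that every vector field `X` on the strip makes `div X - |X|²` a Hardy potential. Two
fields improve on the one of the ground state.

* Near a point where `ϑ'` does not vanish, a small perturbation adds a term linear in its size, and
  this gives the potential `(π / b)² + c χ(t)²` for a cutoff `χ`.
* Adding the one-dimensional Hardy field `-s / (2 (L + s²))`, `s = t - t₀`, gives
  `(π / b)² + 1 / (8 (L + s²))` up to a loss that occurs only near `t₀`.

In a suitable convex combination of the two potentials the gain near `t₀` pays for the loss.
-/

/-! ### Completing the square -/

/-- The test functions of the Hardy inequality on `U`: the real-valued `C¹` functions whose support
is a compact subset of `U`. -/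
structure IsTestFunction {E : Type*} [NormedAddCommGroup E] [NormedSpace ℝ E]
    (U : Set E) (w : E → ℝ) : Prop where
  contDiff : ContDiff ℝ 1 w
  hasCompactSupport : HasCompactSupport w
  tsupport_subset : tsupport w ⊆ U

namespace IsTestFunction

variable {E : Type*} [NormedAddCommGroup E] [NormedSpace ℝ E] {U : Set E} {w : E → ℝ}

theorem continuous_fderiv_apply (hw : IsTestFunction U w) (v : E) :
    Continuous fun x => fderiv ℝ w x v :=
  (hw.contDiff.continuous_fderiv one_ne_zero).clm_apply continuous_const

theorem hasLineDerivAt_sq (hw : IsTestFunction U w) (x v : E) :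
    HasLineDerivAt ℝ (fun y => w y ^ 2) (2 * (w x * fderiv ℝ w x v)) x v := by
  simpa [mul_assoc] using
    ((hw.contDiff.differentiable one_ne_zero x).hasFDerivAt.pow 2).hasLineDerivAt v

variable [MeasurableSpace E] [OpensMeasurableSpace E] {μ : Measure E} [IsFiniteMeasureOnCompacts μ]
  {g : E → ℝ}

theorem integrable_mul_mul (hw : IsTestFunction U w) (hU : IsOpen U) (hg : ContinuousOn g U)
    {f : E → ℝ} (hf : Continuous f) : Integrable (fun x => g x * (w x * f x)) μ := by
  refine Continuous.integrable_of_hasCompactSupport ?_ hw.hasCompactSupport.mul_right.mul_left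
  refine (hg.mul (hw.contDiff.continuous.mul hf).continuousOn).continuous_of_tsupport_subset hU ?_
  exact (tsupport_mul_subset_right.trans tsupport_mul_subset_left).trans hw.tsupport_subset

theorem integrable_mul_sq (hw : IsTestFunction U w) (hU : IsOpen U) (hg : ContinuousOn g U) :
    Integrable (fun x => g x * w x ^ 2) μ := by
  simpa only [sq] using hw.integrable_mul_mul hU hg hw.contDiff.continuous

theorem integral_linearComb_mul_sq (hw : IsTestFunction U w) (hU : IsOpen U) {V₁ V₂ : E → ℝ}
    (hV₁ : ContinuousOn V₁ U) (hV₂ : ContinuousOn V₂ U) (α β : ℝ) :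
    ∫ x, (α * V₁ x + β * V₂ x) * w x ^ 2 ∂μ =
      α * ∫ x, V₁ x * w x ^ 2 ∂μ + β * ∫ x, V₂ x * w x ^ 2 ∂μ := by
  simp only [add_mul, mul_assoc]
  rw [integral_add ((hw.integrable_mul_sq hU hV₁).const_mul α)
    ((hw.integrable_mul_sq hU hV₂).const_mul β), integral_const_mul, integral_const_mul]

theorem integrable_fderiv_sq (hw : IsTestFunction U w) (v : E) :
    Integrable (fun x => fderiv ℝ w x v ^ 2) μ :=
  ((hw.continuous_fderiv_apply v).pow 2).integrable_of_hasCompactSupport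
    ((hw.hasCompactSupport.fderiv_apply ℝ v).comp_left (zero_pow two_ne_zero))

theorem integrable_mul_lineDeriv_sq (hw : IsTestFunction U w) (hU : IsOpen U)
    (hg : ContinuousOn g U) (v : E) :
    Integrable (fun x => g x * (2 * (w x * fderiv ℝ w x v))) μ := by
  simpa only [mul_left_comm] using
    hw.integrable_mul_mul hU hg ((hw.continuous_fderiv_apply v).const_mul 2)

end IsTestFunction

section Riccati

variable {E : Type*} [NormedAddCommGroup E] [NormedSpace ℝ E] [FiniteDimensional ℝ E]
  [MeasurableSpace E] [BorelSpace E] {μ : Measure E} [μ.IsAddHaarMeasure]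
  {U : Set E} {w M M' : E → ℝ} {v : E}

theorem IsTestFunction.integral_mul_lineDeriv_sq_eq_neg (hw : IsTestFunction U w) (hU : IsOpen U)
    (hM : ContinuousOn M U) (hM' : ContinuousOn M' U)
    (hderiv : ∀ x ∈ U, HasLineDerivAt ℝ M (M' x) x v) :
    ∫ x, M x * (2 * (w x * fderiv ℝ w x v)) ∂μ = -∫ x, M' x * w x ^ 2 ∂μ := by
  have hsub : tsupport (fun x => w x ^ 2) ⊆ U := by
    simpa only [sq] using tsupport_mul_subset_left.trans hw.tsupport_subset
  exact integral_bilinear_hasLineDerivAt_right_eq_neg_left_of_integrable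
    (B := ContinuousLinearMap.mul ℝ ℝ) (hw.integrable_mul_sq hU hM')
    (hw.integrable_mul_lineDeriv_sq hU hM v) (hw.integrable_mul_sq hU hM)
    (fun x hx => hderiv x (hsub hx)) (fun x _ => hw.hasLineDerivAt_sq x v)

theorem IsTestFunction.integral_riccati_le (hw : IsTestFunction U w) (hU : IsOpen U)
    (hM : ContinuousOn M U) (hM' : ContinuousOn M' U)
    (hderiv : ∀ x ∈ U, HasLineDerivAt ℝ M (M' x) x v) :
    ∫ x, (M' x - M x ^ 2) * w x ^ 2 ∂μ ≤ ∫ x, fderiv ℝ w x v ^ 2 ∂μ := by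
  have hgrad : Integrable (fun x => fderiv ℝ w x v ^ 2) μ := hw.integrable_fderiv_sq v
  have hM'sq : Integrable (fun x => M' x * w x ^ 2) μ := hw.integrable_mul_sq hU hM'
  have hcross : Integrable (fun x => M x * (2 * (w x * fderiv ℝ w x v))) μ :=
    hw.integrable_mul_lineDeriv_sq hU hM v
  have hsum : Integrable (fun x => M' x * w x ^ 2 + M x * (2 * (w x * fderiv ℝ w x v))) μ :=
    hM'sq.add hcross
  calc ∫ x, (M' x - M x ^ 2) * w x ^ 2 ∂μ
      ≤ ∫ x, (fderiv ℝ w x v ^ 2 +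
          (M' x * w x ^ 2 + M x * (2 * (w x * fderiv ℝ w x v)))) ∂μ := by
        refine integral_mono (hw.integrable_mul_sq hU (hM'.sub (hM.pow 2)))
          (hgrad.add hsum) fun x => ?_
        linarith [sq_nonneg (fderiv ℝ w x v + M x * w x)]
    _ = ∫ x, fderiv ℝ w x v ^ 2 ∂μ := by
        rw [integral_add hgrad hsum, integral_add hM'sq hcross,
          hw.integral_mul_lineDeriv_sq_eq_neg hU hM hM' hderiv, add_neg_cancel, add_zero]

end Riccati

/-! ### Hardy potentials on twisted strips -/

/-- `V` is a Hardy potential on `U ⊆ ℝ²` if its quadratic form on test functions is dominated by the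
Dirichlet energy. The integrals run over the whole plane because test functions vanish off `U`. -/
def IsHardyPotential (U : Set (ℝ × ℝ)) (V : ℝ × ℝ → ℝ) : Prop :=
  ∀ w : ℝ × ℝ → ℝ, IsTestFunction U w →
    ∫ p, V p * w p ^ 2 ≤ ∫ p, (fderiv ℝ w p (1, 0) ^ 2 + fderiv ℝ w p (0, 1) ^ 2)

namespace IsHardyPotential

variable {U : Set (ℝ × ℝ)} {V V₁ V₂ : ℝ × ℝ → ℝ}

theorem mono (hV₂ : IsHardyPotential U V₂) (hU : IsOpen U) (hc₁ : ContinuousOn V₁ U)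
    (hc₂ : ContinuousOn V₂ U) (hle : ∀ p ∈ U, V₁ p ≤ V₂ p) : IsHardyPotential U V₁ := by
  refine fun w hw => le_trans ?_ (hV₂ w hw)
  refine integral_mono (hw.integrable_mul_sq hU hc₁) (hw.integrable_mul_sq hU hc₂) fun p => ?_
  by_cases hp : p ∈ U
  · exact mul_le_mul_of_nonneg_right (hle p hp) (sq_nonneg _)
  · simp [image_eq_zero_of_notMem_tsupport fun h => hp (hw.tsupport_subset h)]

theorem convexComb (hV₁ : IsHardyPotential U V₁) (hV₂ : IsHardyPotential U V₂) (hU : IsOpen U)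
    (hc₁ : ContinuousOn V₁ U) (hc₂ : ContinuousOn V₂ U) {α β : ℝ} (hα : 0 ≤ α) (hβ : 0 ≤ β)
    (hαβ : α + β = 1) : IsHardyPotential U fun p => α * V₁ p + β * V₂ p := by
  intro w hw
  rw [hw.integral_linearComb_mul_sq hU hc₁ hc₂]
  exact convex_Iic (𝕜 := ℝ) _ (mem_Iic.2 (hV₁ w hw)) (mem_Iic.2 (hV₂ w hw)) hα hβ hαβ

theorem of_hasLineDerivAt {M M' N N' : ℝ × ℝ → ℝ} (hU : IsOpen U) (hV : ContinuousOn V U)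
    (hM : ContinuousOn M U) (hM' : ContinuousOn M' U) (hN : ContinuousOn N U)
    (hN' : ContinuousOn N' U) (hderivM : ∀ p ∈ U, HasLineDerivAt ℝ M (M' p) p (1, 0))
    (hderivN : ∀ p ∈ U, HasLineDerivAt ℝ N (N' p) p (0, 1))
    (hle : ∀ p ∈ U, V p ≤ M' p - M p ^ 2 + (N' p - N p ^ 2)) : IsHardyPotential U V := by
  have hriccatiM : ContinuousOn (fun p => M' p - M p ^ 2) U := hM'.sub (hM.pow 2)
  have hriccatiN : ContinuousOn (fun p => N' p - N p ^ 2) U := hN'.sub (hN.pow 2)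
  refine mono (fun w hw => ?_) hU hV (hriccatiM.add hriccatiN) hle
  simp only [Pi.add_apply, add_mul]
  rw [integral_add (hw.integrable_mul_sq hU hriccatiM) (hw.integrable_mul_sq hU hriccatiN),
    integral_add (hw.integrable_fderiv_sq _) (hw.integrable_fderiv_sq _)]
  exact add_le_add (hw.integral_riccati_le hU hM hM' hderivM)
    (hw.integral_riccati_le hU hN hN' hderivN)

end IsHardyPotential

section Slices

variable {f : ℝ × ℝ → ℝ} {d : ℝ} {p : ℝ × ℝ}

theorem hasLineDerivAt_one_zero_of_hasDerivAt (h : HasDerivAt (fun t => f (t, p.2)) d p.1) :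
    HasLineDerivAt ℝ f d p (1, 0) := by
  have hshift : HasDerivAt (fun t => f (p.1 + t, p.2)) d 0 :=
    HasDerivAt.comp_const_add p.1 0 (by rwa [add_zero])
  simpa [HasLineDerivAt, Prod.add_def] using hshift

theorem hasLineDerivAt_zero_one_of_hasDerivAt (h : HasDerivAt (fun y => f (p.1, y)) d p.2) :
    HasLineDerivAt ℝ f d p (0, 1) := by
  have hshift : HasDerivAt (fun y => f (p.1, p.2 + y)) d 0 :=
    HasDerivAt.comp_const_add p.2 0 (by rwa [add_zero])
  simpa [HasLineDerivAt, Prod.add_def] using hshift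

end Slices

/-- The strip of width `b` in the `(t, y)`-plane sheared by `ϑ`: the curved wedge seen in the
logarithmic polar coordinates `t = log r` and `y` = angle. -/
def twistedStrip (ϑ : ℝ → ℝ) (b : ℝ) : Set (ℝ × ℝ) :=
  {p | p.2 ∈ Ioo (ϑ p.1) (ϑ p.1 + b)}

/-- The transverse variable of `twistedStrip ϑ b`, rescaled to run over `(0, π)`. Its sine is the
first Dirichlet eigenfunction of each cross-section. -/
def stripPhase (ϑ : ℝ → ℝ) (b : ℝ) (p : ℝ × ℝ) : ℝ :=
  π / b * (p.2 - ϑ p.1)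

section TwistedStrip

variable {ϑ ϑ' : ℝ → ℝ} {b : ℝ}

theorem isOpen_twistedStrip (hϑ : Continuous ϑ) : IsOpen (twistedStrip ϑ b) :=
  (isOpen_lt (hϑ.comp continuous_fst) continuous_snd).inter
    (isOpen_lt continuous_snd ((hϑ.comp continuous_fst).add continuous_const))

theorem continuous_stripPhase (hϑ : Continuous ϑ) : Continuous (stripPhase ϑ b) := by
  unfold stripPhase
  fun_prop

theorem stripPhase_mem_Ioo (hb : 0 < b) {p : ℝ × ℝ} (hp : p ∈ twistedStrip ϑ b) :
    stripPhase ϑ b p ∈ Ioo 0 π := by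
  refine ⟨mul_pos (div_pos pi_pos hb) (sub_pos.2 hp.1), ?_⟩
  calc π / b * (p.2 - ϑ p.1) < π / b * b :=
        mul_lt_mul_of_pos_left (sub_lt_iff_lt_add'.2 hp.2) (div_pos pi_pos hb)
    _ = π := div_mul_cancel₀ π hb.ne'

theorem sin_stripPhase_pos (hb : 0 < b) {p : ℝ × ℝ} (hp : p ∈ twistedStrip ϑ b) :
    0 < sin (stripPhase ϑ b p) :=
  sin_pos_of_mem_Ioo (stripPhase_mem_Ioo hb hp)

theorem hasDerivAt_stripPhase_fst {t : ℝ} (hϑ : HasDerivAt ϑ (ϑ' t) t) (y : ℝ) :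
    HasDerivAt (fun s => stripPhase ϑ b (s, y)) (-(π / b * ϑ' t)) t := by
  simpa [stripPhase] using (hϑ.const_sub y).const_mul (π / b)

theorem hasDerivAt_stripPhase_snd (t y : ℝ) :
    HasDerivAt (fun z => stripPhase ϑ b (t, z)) (π / b) y := by
  simpa [stripPhase] using ((hasDerivAt_id y).sub_const (ϑ t)).const_mul (π / b)

theorem hasDerivAt_cot_stripPhase {p : ℝ × ℝ} (hb : 0 < b) (hp : p ∈ twistedStrip ϑ b) :
    HasDerivAt (fun y => cot (stripPhase ϑ b (p.1, y)))
      (-(π / b * (1 + cot (stripPhase ϑ b p) ^ 2))) p.2 := by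
  have hsin : sin (stripPhase ϑ b p) ≠ 0 := (sin_stripPhase_pos hb hp).ne'
  simp only [cot_eq_cos_div_sin]
  have hphase := hasDerivAt_stripPhase_snd (ϑ := ϑ) (b := b) p.1 p.2
  convert! hphase.cos.div hphase.sin hsin using 1
  field_simp
  ring

theorem continuousOn_cot_stripPhase (hϑ : Continuous ϑ) (hb : 0 < b) :
    ContinuousOn (fun p => cot (stripPhase ϑ b p)) (twistedStrip ϑ b) := by
  simp only [cot_eq_cos_div_sin]
  exact ContinuousOn.div (continuous_cos.comp (continuous_stripPhase hϑ)).continuousOn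
    (continuous_sin.comp (continuous_stripPhase hϑ)).continuousOn
    fun p hp => (sin_stripPhase_pos hb hp).ne'

theorem isHardyPotential_twistedStrip_of_perturbation {V M M' η η' : ℝ × ℝ → ℝ}
    (hϑ : Continuous ϑ) (hb : 0 < b) (hV : Continuous V)
    (hM : Continuous M) (hM' : Continuous M') (hη : Continuous η) (hη' : Continuous η')
    (hderivM : ∀ p, HasDerivAt (fun t => M (t, p.2)) (M' p) p.1)
    (hderivη : ∀ p, HasDerivAt (fun y => η (p.1, y)) (η' p) p.2)
    (hle : ∀ p ∈ twistedStrip ϑ b, V p ≤ (π / b) ^ 2 +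
      (M' p - η' p - 2 * (π / b) * cot (stripPhase ϑ b p) * η p) - (M p ^ 2 + η p ^ 2)) :
    IsHardyPotential (twistedStrip ϑ b) V := by
  have hcot := continuousOn_cot_stripPhase hϑ hb
  have hN : ContinuousOn (fun p => -(π / b) * cot (stripPhase ϑ b p) - η p) (twistedStrip ϑ b) :=
    (hcot.const_mul _).sub hη.continuousOn
  have hN' : ContinuousOn
      (fun p => -(π / b) * -(π / b * (1 + cot (stripPhase ϑ b p) ^ 2)) - η' p)
      (twistedStrip ϑ b) :=
    ((((hcot.pow 2).const_add 1).const_mul (π / b)).neg.const_mul _).sub hη'.continuousOn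
  refine IsHardyPotential.of_hasLineDerivAt (isOpen_twistedStrip hϑ) hV.continuousOn
    hM.continuousOn hM'.continuousOn hN hN'
    (fun p _ => hasLineDerivAt_one_zero_of_hasDerivAt (hderivM p))
    (fun p hp => hasLineDerivAt_zero_one_of_hasDerivAt
      (((hasDerivAt_cot_stripPhase hb hp).const_mul _).sub (hderivη p)))
    fun p hp => (hle p hp).trans_eq ?_
  ring

end TwistedStrip

/-- First component of the field by which the ground-state field of the strip is perturbed where the
strip is twisted; `χ` cuts off in `t`. -/
def twistFieldFst (ϑ χ : ℝ → ℝ) (b : ℝ) (p : ℝ × ℝ) : ℝ :=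
  χ p.1 ^ 2 * (2 * sin (stripPhase ϑ b p) * cos (stripPhase ϑ b p))

/-- Minus the second component of the perturbing field, see `twistFieldFst`. -/
def twistFieldSnd (ϑ ϑ' χ : ℝ → ℝ) (b : ℝ) (p : ℝ × ℝ) : ℝ :=
  sin (stripPhase ϑ b p) * χ p.1 * (deriv χ p.1 / (π / b) * sin (stripPhase ϑ b p) -
    ϑ' p.1 * χ p.1 * cos (stripPhase ϑ b p))

section TwistField

variable {ϑ ϑ' χ : ℝ → ℝ} {b : ℝ}

theorem hasDerivAt_twistFieldFst {p : ℝ × ℝ} (hϑ : HasDerivAt ϑ (ϑ' p.1) p.1)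
    (hχ : ContDiff ℝ 1 χ) :
    HasDerivAt (fun t => twistFieldFst ϑ χ b (t, p.2))
      (2 * χ p.1 * deriv χ p.1 * (2 * sin (stripPhase ϑ b p) * cos (stripPhase ϑ b p)) -
        2 * (π / b) * ϑ' p.1 * χ p.1 ^ 2 *
          (cos (stripPhase ϑ b p) ^ 2 - sin (stripPhase ϑ b p) ^ 2)) p.1 := by
  have hχderiv := (hχ.differentiable one_ne_zero p.1).hasDerivAt
  have hphase := hasDerivAt_stripPhase_fst (b := b) hϑ p.2
  convert! (hχderiv.pow 2).mul ((hphase.sin.const_mul 2).mul hphase.cos) using 1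
  simp only [Pi.mul_apply, Pi.pow_apply, Prod.mk.eta, Nat.cast_ofNat, Nat.add_one_sub_one, pow_one]
  ring

theorem hasDerivAt_twistFieldSnd (hb : b ≠ 0) (p : ℝ × ℝ) :
    HasDerivAt (fun y => twistFieldSnd ϑ ϑ' χ b (p.1, y))
      (χ p.1 * deriv χ p.1 * (2 * sin (stripPhase ϑ b p) * cos (stripPhase ϑ b p)) -
        π / b * ϑ' p.1 * χ p.1 ^ 2 *
          (cos (stripPhase ϑ b p) ^ 2 - sin (stripPhase ϑ b p) ^ 2)) p.2 := by
  have hphase := hasDerivAt_stripPhase_snd (ϑ := ϑ) (b := b) p.1 p.2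
  convert! (hphase.sin.mul_const (χ p.1)).mul
    ((hphase.sin.const_mul (deriv χ p.1 / (π / b))).sub
      (hphase.cos.const_mul (ϑ' p.1 * χ p.1))) using 1
  simp only [Pi.sub_apply]
  field_simp
  ring

theorem twistField_sq_add_sq_le (p : ℝ × ℝ) :
    twistFieldFst ϑ χ b p ^ 2 + twistFieldSnd ϑ ϑ' χ b p ^ 2 ≤
      χ p.1 ^ 2 * (χ p.1 ^ 2 + ((deriv χ p.1 / (π / b)) ^ 2 + (ϑ' p.1 * χ p.1) ^ 2)) := by
  unfold twistFieldFst twistFieldSnd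
  set φ := stripPhase ϑ b p
  set α := deriv χ p.1 / (π / b)
  set β := ϑ' p.1 * χ p.1
  have hcauchy : (α * sin φ - β * cos φ) ^ 2 ≤ α ^ 2 + β ^ 2 := by
    linear_combination (α ^ 2 + β ^ 2) * sin_sq_add_cos_sq φ + sq_nonneg (α * cos φ + β * sin φ)
  have hsecond : sin φ ^ 2 * (α * sin φ - β * cos φ) ^ 2 ≤ 1 * (α ^ 2 + β ^ 2) :=
    mul_le_mul (sin_sq_le_one φ) hcauchy (sq_nonneg _) zero_le_one
  have hfirst : (2 * sin φ * cos φ) ^ 2 ≤ 1 := by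
    rw [← sin_two_mul]
    exact sin_sq_le_one _
  calc _ = χ p.1 ^ 2 * (χ p.1 ^ 2 * (2 * sin φ * cos φ) ^ 2 +
        sin φ ^ 2 * (α * sin φ - β * cos φ) ^ 2) := by ring
    _ ≤ χ p.1 ^ 2 * (χ p.1 ^ 2 * 1 + 1 * (α ^ 2 + β ^ 2)) := by gcongr
    _ = _ := by rw [mul_one, one_mul]

theorem cot_mul_twistFieldSnd (hb : 0 < b) {p : ℝ × ℝ} (hp : p ∈ twistedStrip ϑ b) :
    2 * (π / b) * cot (stripPhase ϑ b p) * twistFieldSnd ϑ ϑ' χ b p =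
      2 * χ p.1 * cos (stripPhase ϑ b p) * (deriv χ p.1 * sin (stripPhase ϑ b p) -
        π / b * ϑ' p.1 * χ p.1 * cos (stripPhase ϑ b p)) := by
  have hsin : sin (stripPhase ϑ b p) ≠ 0 := (sin_stripPhase_pos hb hp).ne'
  rw [cot_eq_cos_div_sin, twistFieldSnd]
  field_simp

theorem isHardyPotential_twistedStrip_of_twistField {V : ℝ × ℝ → ℝ}
    (hϑ : ∀ t, HasDerivAt ϑ (ϑ' t) t) (hϑ' : Continuous ϑ') (hb : 0 < b) (hχ : ContDiff ℝ 1 χ)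
    (hV : Continuous V) (τ : ℝ)
    (hle : ∀ p, V p ≤ (π / b) ^ 2 + τ * (π / b) * ϑ' p.1 * χ p.1 ^ 2 -
      τ ^ 2 * (χ p.1 ^ 2 * (χ p.1 ^ 2 + ((deriv χ p.1 / (π / b)) ^ 2 + (ϑ' p.1 * χ p.1) ^ 2)))) :
    IsHardyPotential (twistedStrip ϑ b) V := by
  have hϑcont : Continuous ϑ := continuous_iff_continuousAt.2 fun t => (hϑ t).continuousAt
  have hphase : Continuous (stripPhase ϑ b) := continuous_stripPhase hϑcont
  refine isHardyPotential_twistedStrip_of_perturbation hϑcont hb hV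
    (M := fun p => τ * twistFieldFst ϑ χ b p) (η := fun p => τ * twistFieldSnd ϑ ϑ' χ b p)
    (by unfold twistFieldFst; fun_prop) ?_ (by unfold twistFieldSnd; fun_prop) ?_
    (fun p => (hasDerivAt_twistFieldFst (hϑ p.1) hχ).const_mul τ)
    (fun p => (hasDerivAt_twistFieldSnd hb.ne' p).const_mul τ)
    fun p hp => (hle p).trans ?_
  · fun_prop
  · fun_prop
  · have hquadratic := mul_le_mul_of_nonneg_left
      (twistField_sq_add_sq_le (ϑ := ϑ) (ϑ' := ϑ') (χ := χ) (b := b) p) (sq_nonneg τ)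
    -- The terms linear in `τ` collapse to `τ k ϑ' χ²`, with `k = π / b`.
    linear_combination hquadratic + τ * cot_mul_twistFieldSnd (ϑ' := ϑ') (χ := χ) hb hp -
      τ * (π / b) * ϑ' p.1 * χ p.1 ^ 2 * sin_sq_add_cos_sq (stripPhase ϑ b p)

theorem exists_isHardyPotential_twistedStrip_add_cutoff
    (hϑ : ∀ t, HasDerivAt ϑ (ϑ' t) t) (hϑ' : Continuous ϑ') (hb : 0 < b) (hχ : ContDiff ℝ 1 χ)
    (hcompact : HasCompactSupport χ) {σ : ℝ} (hσ : ∀ t ∈ Function.support χ, 1 ≤ σ * ϑ' t) :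
    ∃ c > 0, IsHardyPotential (twistedStrip ϑ b) fun p => (π / b) ^ 2 + c * χ p.1 ^ 2 := by
  let Q (t : ℝ) := χ t ^ 2 + ((deriv χ t / (π / b)) ^ 2 + (ϑ' t * χ t) ^ 2)
  have hQsupp : HasCompactSupport Q := .intro hcompact fun t ht => by
    simp [Q, image_eq_zero_of_notMem_tsupport ht, deriv_of_notMem_tsupport ht]
  obtain ⟨B₀, hB₀⟩ :=
    (hQsupp.mul_left (f := fun _ => σ ^ 2)).exists_bound_of_continuous (by fun_prop)
  obtain ⟨B, hB, hQB⟩ : ∃ B > 0, ∀ t, σ ^ 2 * Q t ≤ B :=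
    ⟨|B₀| + 1, by positivity, fun t =>
      (le_norm_self _).trans ((hB₀ t).trans ((le_abs_self B₀).trans (lt_add_one _).le))⟩
  obtain ⟨ε, hε, hεB⟩ : ∃ ε > 0, ε * B = π / b / 2 :=
    ⟨π / b / 2 / B, by positivity, div_mul_cancel₀ _ hB.ne'⟩
  refine ⟨ε * (π / b) / 2, by positivity,
    isHardyPotential_twistedStrip_of_twistField hϑ hϑ' hb hχ (by fun_prop) (ε * σ) fun p => ?_⟩
  have hgain : χ p.1 ^ 2 ≤ σ * ϑ' p.1 * χ p.1 ^ 2 := by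
    by_cases hp : χ p.1 = 0
    · simp [hp]
    · exact le_mul_of_one_le_left (sq_nonneg _) (hσ _ hp)
  have hloss : σ ^ 2 * Q p.1 * χ p.1 ^ 2 ≤ B * χ p.1 ^ 2 :=
    mul_le_mul_of_nonneg_right (hQB p.1) (sq_nonneg _)
  linear_combination ε * (π / b) * hgain + ε ^ 2 * hloss + ε * χ p.1 ^ 2 * hεB

end TwistField

theorem hasDerivAt_neg_div_two_mul_add_sq {L : ℝ} (hL : 0 < L) (s : ℝ) :
    HasDerivAt (fun s => -s / (2 * (L + s ^ 2)))
      ((s ^ 2 - L) / (2 * (L + s ^ 2) ^ 2)) s := by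
  have hD : 2 * (L + s ^ 2) ≠ 0 := by positivity
  convert! (hasDerivAt_neg s).div ((((hasDerivAt_id s).pow 2).const_add L).const_mul 2) hD using 1
  simp only [Pi.pow_apply, id_eq, Nat.cast_ofNat, Nat.add_one_sub_one, pow_one]
  field_simp
  ring

theorem div_one_add_sq_le_mul_inv {L α : ℝ} (hL : 0 < L) (hα : 0 ≤ α) (t t₀ : ℝ) :
    α / (8 * (L + 2 + 2 * t₀ ^ 2)) / (1 + t ^ 2) ≤ α * (1 / (8 * (L + (t - t₀) ^ 2))) := by
  rw [div_div, ← div_eq_mul_one_div]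
  refine div_le_div_of_nonneg_left hα (by positivity) ?_
  nlinarith [sq_nonneg (t + t₀), mul_nonneg hL.le (sq_nonneg t),
    mul_nonneg (sq_nonneg t₀) (sq_nonneg t)]

section TwistedStripPotential

variable {ϑ ϑ' : ℝ → ℝ} {b : ℝ}

theorem isHardyPotential_twistedStrip_inv_sq_sub_cutoff (hϑ : Continuous ϑ) (hb : 0 < b) {L : ℝ}
    (hL : 0 < L) (t₀ : ℝ) {g : ℝ → ℝ} (hg : Continuous g) (hg_nonneg : ∀ t, 0 ≤ g t)
    (hg_one : ∀ t, (t - t₀) ^ 2 ≤ 5 * L → 1 ≤ g t) :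
    IsHardyPotential (twistedStrip ϑ b) fun p =>
      (π / b) ^ 2 + (1 / (8 * (L + (p.1 - t₀) ^ 2)) - 5 / (8 * L) * g p.1) := by
  have hD (s : ℝ) : 0 < L + s ^ 2 := by positivity
  refine isHardyPotential_twistedStrip_of_perturbation hϑ hb ?_
    (M := fun p => -(p.1 - t₀) / (2 * (L + (p.1 - t₀) ^ 2)))
    (M' := fun p => ((p.1 - t₀) ^ 2 - L) / (2 * (L + (p.1 - t₀) ^ 2) ^ 2)) ?_ ?_
    continuous_const (η' := fun _ => 0) continuous_const
    (fun p => (hasDerivAt_neg_div_two_mul_add_sq hL (p.1 - t₀)).comp_sub_const p.1 t₀)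
    (fun p => hasDerivAt_const p.2 0) fun p _ => ?_
  any_goals fun_prop (disch := intro p; have := hD (p.1 - t₀); positivity)
  set s := p.1 - t₀
  have hdeficit : (5 * L - s ^ 2) / (8 * (L + s ^ 2) ^ 2) ≤ 5 / (8 * L) * g p.1 := by
    rcases le_total (s ^ 2) (5 * L) with hs | hs
    · calc (5 * L - s ^ 2) / (8 * (L + s ^ 2) ^ 2) ≤ 5 * L / (8 * L ^ 2) := by
            gcongr <;> nlinarith
        _ = 5 / (8 * L) * 1 := by field_simp
        _ ≤ 5 / (8 * L) * g p.1 := by gcongr; exact hg_one _ hs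
    · exact (div_nonpos_of_nonpos_of_nonneg (sub_nonpos.2 hs) (by positivity)).trans
        (mul_nonneg (by positivity) (hg_nonneg _))
  have hriccati : 1 / (8 * (L + s ^ 2)) - (5 * L - s ^ 2) / (8 * (L + s ^ 2) ^ 2) =
      (s ^ 2 - L) / (2 * (L + s ^ 2) ^ 2) - (-s / (2 * (L + s ^ 2))) ^ 2 := by
    have := (hD s).ne'
    field_simp
    ring
  linear_combination hdeficit + hriccati
theorem exists_cutoff_of_ne_zero (hϑ' : Continuous ϑ') {t₀ : ℝ} (ht₀ : ϑ' t₀ ≠ 0) :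
    ∃ χ : ℝ → ℝ, ContDiff ℝ 1 χ ∧ HasCompactSupport χ ∧
      (∃ L > 0, ∀ t, (t - t₀) ^ 2 ≤ 5 * L → 1 ≤ χ t ^ 2) ∧
      ∃ σ, ∀ t ∈ Function.support χ, 1 ≤ σ * ϑ' t := by
  have hnear : ∀ᶠ t in nhds t₀, 1 < 2 / ϑ' t₀ * ϑ' t := by
    have hcenter : 1 < 2 / ϑ' t₀ * ϑ' t₀ := by simp [ht₀]
    exact (hϑ'.const_mul (2 / ϑ' t₀)).continuousAt.eventually_const_lt hcenter
  obtain ⟨r, hr, hball⟩ := Metric.eventually_nhds_iff_ball.1 hnear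
  let χ : ContDiffBump t₀ := ⟨r / 2, r, half_pos hr, half_lt_self hr⟩
  refine ⟨χ, χ.contDiff, χ.hasCompactSupport, ⟨(r / 2) ^ 2 / 5, by positivity, fun t ht => ?_⟩,
    2 / ϑ' t₀, fun t ht => (hball t ?_).le⟩
  · have : t ∈ Metric.closedBall t₀ (r / 2) := by
      rw [mem_closedBall_iff_norm, norm_eq_abs]
      exact abs_le_of_sq_le_sq (by linarith) (half_pos hr).le
    simp [χ.one_of_mem_closedBall this]
  · rwa [χ.support_eq] at ht

theorem exists_isHardyPotential_twistedStrip (hϑ : ∀ t, HasDerivAt ϑ (ϑ' t) t)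
    (hϑ' : Continuous ϑ') (hne : ∃ t, ϑ' t ≠ 0) (hb : 0 < b) :
    ∃ c > 0, IsHardyPotential (twistedStrip ϑ b) fun p => (π / b) ^ 2 + c / (1 + p.1 ^ 2) := by
  have hϑcont : Continuous ϑ := continuous_iff_continuousAt.2 fun t => (hϑ t).continuousAt
  have hopen : IsOpen (twistedStrip ϑ b) := isOpen_twistedStrip hϑcont
  obtain ⟨t₀, ht₀⟩ := hne
  obtain ⟨χ, hχ, hcompact, ⟨L, hL, hχone⟩, σ, hσ⟩ := exists_cutoff_of_ne_zero hϑ' ht₀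
  have hχcont : Continuous χ := hχ.continuous
  obtain ⟨c, hc, hlocal⟩ :=
    exists_isHardyPotential_twistedStrip_add_cutoff hϑ hϑ' hb hχ hcompact hσ
  have hglobal := isHardyPotential_twistedStrip_inv_sq_sub_cutoff hϑcont hb hL t₀
    (g := fun t => χ t ^ 2) (hχcont.pow 2) (fun t => sq_nonneg (χ t)) hχone
  obtain ⟨α, hα, β, hβ, hαβ, hcancel⟩ :
      ∃ α > 0, ∃ β > 0, α + β = 1 ∧ α * (5 / (8 * L)) = β * c := by
    refine ⟨c / (c + 5 / (8 * L)), by positivity, 5 / (8 * L) / (c + 5 / (8 * L)),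
      by positivity, by field_simp, by ring⟩
  have hcont_global : Continuous fun p : ℝ × ℝ =>
      (π / b) ^ 2 + (1 / (8 * (L + (p.1 - t₀) ^ 2)) - 5 / (8 * L) * χ p.1 ^ 2) := by
    fun_prop (disch := intro p; positivity)
  have hcont_local : Continuous fun p : ℝ × ℝ => (π / b) ^ 2 + c * χ p.1 ^ 2 := by fun_prop
  have hcont : Continuous fun p : ℝ × ℝ =>
      (π / b) ^ 2 + α / (8 * (L + 2 + 2 * t₀ ^ 2)) / (1 + p.1 ^ 2) := by
    fun_prop (disch := intro p; positivity)
  refine ⟨α / (8 * (L + 2 + 2 * t₀ ^ 2)), by positivity,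
    (hglobal.convexComb hlocal hopen hcont_global.continuousOn hcont_local.continuousOn hα.le
      hβ.le hαβ).mono hopen hcont.continuousOn
      ((hcont_global.const_mul α).add (hcont_local.const_mul β)).continuousOn fun p _ => ?_⟩
  linear_combination div_one_add_sq_le_mul_inv hL hα.le p.1 t₀ - (π / b) ^ 2 * hαβ +
    χ p.1 ^ 2 * hcancel

end TwistedStripPotential

/-! ### Logarithmic polar coordinates -/

theorem isCompact_inter_preimage_of_isOpenMap {X Y : Type*} [TopologicalSpace X]
    [TopologicalSpace Y] {f : X → Y} {S : Set X} {K : Set Y} (hf : Continuous f)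
    (hopen : IsOpenMap f) (hS : IsOpen S) (hinj : InjOn f S) (hK : IsCompact K)
    (hKS : K ⊆ f '' S) : IsCompact (S ∩ f ⁻¹' K) := by
  rcases S.eq_empty_or_nonempty with rfl | ⟨x₀, _⟩
  · simp
  have : Nonempty X := ⟨x₀⟩
  let e : OpenPartialHomeomorph X Y :=
    .ofContinuousOpen (hinj.toPartialEquiv) hf.continuousOn hopen hS
  have hsymm : e.symm '' K = S ∩ f ⁻¹' K := e.symm_image_eq_source_inter_preimage hKS
  exact hsymm ▸ hK.image_of_continuousOn (e.continuousOn_symm.mono hKS)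

theorem IsTestFunction.indicator_comp {E F : Type*} [NormedAddCommGroup E] [NormedSpace ℝ E]
    [NormedAddCommGroup F] [NormedSpace ℝ F] {f : E → F} {S : Set E} {u : F → ℝ}
    (hu : IsTestFunction (f '' S) u) (hf : ContDiff ℝ 1 f) (hopen : IsOpenMap f) (hS : IsOpen S)
    (hinj : InjOn f S) : IsTestFunction S (S.indicator (u ∘ f)) := by
  have hcompact : IsCompact (S ∩ f ⁻¹' tsupport u) :=
    isCompact_inter_preimage_of_isOpenMap hf.continuous hopen hS hinj hu.hasCompactSupport
      hu.tsupport_subset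
  have hsupport : tsupport (S.indicator (u ∘ f)) ⊆ S ∩ f ⁻¹' tsupport u := by
    refine closure_minimal (fun x hx => ?_) hcompact.isClosed
    rw [Function.mem_support, indicator_apply_ne_zero] at hx
    exact ⟨hx.1, subset_tsupport u hx.2⟩
  refine ⟨contMDiff_iff_contDiff.1 (contMDiff_of_tsupport fun x hx => ContDiffAt.contMDiffAt ?_),
    hcompact.of_isClosed_subset (isClosed_tsupport _) hsupport, hsupport.trans inter_subset_left⟩
  exact (hu.contDiff.comp hf).contDiffAt.congr_of_eventuallyEq
    (eqOn_indicator.eventuallyEq_of_mem (hS.mem_nhds (hsupport hx).1))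

/-- Logarithmic polar coordinates on the plane: the complex exponential, read in `ℝ × ℝ`. -/
def logPolar (p : ℝ × ℝ) : ℝ × ℝ :=
  (exp p.1 * cos p.2, exp p.1 * sin p.2)

/-- The derivative of `logPolar` at `p`, a similarity of ratio `exp p.1`. -/
def fderivLogPolar (p : ℝ × ℝ) : ℝ × ℝ →L[ℝ] ℝ × ℝ :=
  (Matrix.toLin (.finTwoProd ℝ) (.finTwoProd ℝ)
    !![exp p.1 * cos p.2, -(exp p.1 * sin p.2);
       exp p.1 * sin p.2, exp p.1 * cos p.2]).toContinuousLinearMap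

theorem contDiff_logPolar : ContDiff ℝ 1 logPolar := by
  unfold logPolar
  fun_prop

theorem hasFDerivAt_logPolar (p : ℝ × ℝ) : HasFDerivAt logPolar (fderivLogPolar p) p := by
  have hexp := (hasDerivAt_exp p.1).comp_hasFDerivAt p (hasFDerivAt_fst (𝕜 := ℝ))
  rw [fderivLogPolar, Matrix.toLin_finTwoProd_toContinuousLinearMap]
  convert! (hexp.mul ((hasDerivAt_cos p.2).comp_hasFDerivAt p hasFDerivAt_snd)).prodMk
      (hexp.mul ((hasDerivAt_sin p.2).comp_hasFDerivAt p hasFDerivAt_snd)) using 2 <;>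
    ext <;> simp <;> ring

theorem det_fderivLogPolar (p : ℝ × ℝ) : (fderivLogPolar p).det = exp (2 * p.1) := by
  simp only [fderivLogPolar, LinearMap.det_toContinuousLinearMap, LinearMap.det_toLin,
    Matrix.det_fin_two_of, two_mul, exp_add]
  linear_combination (exp p.1 * exp p.1) * sin_sq_add_cos_sq p.2

theorem isOpenMap_logPolar : IsOpenMap logPolar := by
  refine isOpenMap_iff_nhds_le.2 fun p => ?_
  have hdet : (fderivLogPolar p).det ≠ 0 := by simp [det_fderivLogPolar]
  have hstrict : HasStrictFDerivAt logPolar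
      ((fderivLogPolar p).toContinuousLinearEquivOfDetNeZero hdet : ℝ × ℝ →L[ℝ] ℝ × ℝ) p :=
    contDiff_logPolar.contDiffAt.hasStrictFDerivAt' (hasFDerivAt_logPolar p) one_ne_zero
  exact hstrict.map_nhds_eq_of_equiv.ge

theorem enorm2_logPolar (p : ℝ × ℝ) : enorm2 (logPolar p) = exp p.1 := by
  rw [enorm2, logPolar, sqrt_eq_iff_mul_self_eq_of_pos (exp_pos _)]
  linear_combination -exp p.1 ^ 2 * sin_sq_add_cos_sq p.2

theorem injOn_logPolar_twistedStrip {ϑ : ℝ → ℝ} {b : ℝ} (hb : b ≤ 2 * π) :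
    InjOn logPolar (twistedStrip ϑ b) := by
  rintro p ⟨hp₁, hp₂⟩ q ⟨hq₁, hq₂⟩ hpq
  have hfst : p.1 = q.1 := exp_injective (by rw [← enorm2_logPolar, hpq, enorm2_logPolar])
  obtain ⟨hcos, hsin⟩ : cos p.2 = cos q.2 ∧ sin p.2 = sin q.2 := by
    simpa [logPolar, hfst] using hpq
  have hcos_sub : cos (p.2 - q.2) = 1 := by
    rw [cos_sub, hcos, hsin, ← sq, ← sq, cos_sq_add_sin_sq]
  rw [hfst] at hp₁ hp₂
  rw [cos_eq_one_iff_of_lt_of_lt (by linarith) (by linarith), sub_eq_zero] at hcos_sub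
  exact Prod.ext hfst hcos_sub

theorem curvedWedge_eq_image_logPolar (a : ℝ) (θ : ℝ → ℝ) :
    curvedWedge a θ = logPolar '' twistedStrip (θ ∘ exp) (2 * π * a) := by
  ext x
  constructor
  · rintro ⟨r, hr, φ, hφ, rfl⟩
    refine ⟨(log r, φ + θ r), ?_, by simp [logPolar, exp_log hr]⟩
    simpa [twistedStrip, exp_log hr, add_comm φ] using hφ
  · rintro ⟨p, hp, rfl⟩
    exact ⟨exp p.1, exp_pos _, p.2 - θ (exp p.1), ⟨sub_pos.2 hp.1, sub_lt_iff_lt_add'.2 hp.2⟩,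
      by simp [logPolar]⟩

theorem fderivLogPolar_one_zero (p : ℝ × ℝ) :
    fderivLogPolar p (1, 0) = (exp p.1 * cos p.2, exp p.1 * sin p.2) := by
  simp [fderivLogPolar, Matrix.toLin_finTwoProd_apply]

theorem fderivLogPolar_zero_one (p : ℝ × ℝ) :
    fderivLogPolar p (0, 1) = (-(exp p.1 * sin p.2), exp p.1 * cos p.2) := by
  simp [fderivLogPolar, Matrix.toLin_finTwoProd_apply]

theorem fderiv_comp_logPolar_sq_add_sq {u : ℝ × ℝ → ℝ} {p : ℝ × ℝ}
    (hu : DifferentiableAt ℝ u (logPolar p)) :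
    fderiv ℝ (u ∘ logPolar) p (1, 0) ^ 2 + fderiv ℝ (u ∘ logPolar) p (0, 1) ^ 2 =
      exp (2 * p.1) *
        (fderiv ℝ u (logPolar p) (1, 0) ^ 2 + fderiv ℝ u (logPolar p) (0, 1) ^ 2) := by
  have hlin : ∀ c d : ℝ, fderiv ℝ u (logPolar p) (c, d) =
      c * fderiv ℝ u (logPolar p) (1, 0) + d * fderiv ℝ u (logPolar p) (0, 1) := fun c d => by
    rw [← smul_eq_mul, ← smul_eq_mul, ← map_smul, ← map_smul, ← map_add]
    simp
  rw [(hu.hasFDerivAt.comp p (hasFDerivAt_logPolar p)).fderiv, two_mul, exp_add]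
  simp only [ContinuousLinearMap.comp_apply, fderivLogPolar_one_zero, fderivLogPolar_zero_one,
    hlin (_ * _), hlin (-_)]
  linear_combination (exp p.1 * exp p.1) *
    (fderiv ℝ u (logPolar p) (1, 0) ^ 2 + fderiv ℝ u (logPolar p) (0, 1) ^ 2) *
      sin_sq_add_cos_sq p.2

theorem setIntegral_image_logPolar {S : Set (ℝ × ℝ)} (hS : MeasurableSet S)
    (hinj : InjOn logPolar S) (f : ℝ × ℝ → ℝ) :
    ∫ x in logPolar '' S, f x = ∫ p in S, exp (2 * p.1) * f (logPolar p) := by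
  rw [integral_image_eq_integral_abs_det_fderiv_smul volume hS
    (fun p _ => (hasFDerivAt_logPolar p).hasFDerivWithinAt) hinj]
  simp only [det_fderivLogPolar, abs_exp, smul_eq_mul]

theorem IsTestFunction.setIntegral_mul_sq {U : Set (ℝ × ℝ)} {w : ℝ × ℝ → ℝ}
    (hw : IsTestFunction U w) (V : ℝ × ℝ → ℝ) :
    ∫ p in U, V p * w p ^ 2 = ∫ p, V p * w p ^ 2 :=
  setIntegral_eq_integral_of_forall_compl_eq_zero fun p hp => by
    simp [image_eq_zero_of_notMem_tsupport fun h => hp (hw.tsupport_subset h)]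

theorem IsTestFunction.setIntegral_fderiv_sq_add_sq {U : Set (ℝ × ℝ)} {w : ℝ × ℝ → ℝ}
    (hw : IsTestFunction U w) :
    ∫ p in U, (fderiv ℝ w p (1, 0) ^ 2 + fderiv ℝ w p (0, 1) ^ 2) =
      ∫ p, (fderiv ℝ w p (1, 0) ^ 2 + fderiv ℝ w p (0, 1) ^ 2) :=
  setIntegral_eq_integral_of_forall_compl_eq_zero fun p hp => by
    simp [fderiv_of_notMem_tsupport (𝕜 := ℝ) fun h => hp (hw.tsupport_subset h)]

theorem IsHardyPotential.image_logPolar {S : Set (ℝ × ℝ)} {W : ℝ × ℝ → ℝ}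
    (hW : IsHardyPotential S fun p => exp (2 * p.1) * W (logPolar p)) (hS : IsOpen S)
    (hinj : InjOn logPolar S) : IsHardyPotential (logPolar '' S) W := by
  intro u hu
  set w := S.indicator (u ∘ logPolar) with hw_def
  have hw : IsTestFunction S w := hu.indicator_comp contDiff_logPolar isOpenMap_logPolar hS hinj
  have hfderiv : ∀ p ∈ S, fderiv ℝ w p = fderiv ℝ (u ∘ logPolar) p := fun p hp =>
    (eqOn_indicator.eventuallyEq_of_mem (hS.mem_nhds hp)).fderiv_eq
  calc ∫ x, W x * u x ^ 2
      = ∫ p in S, exp (2 * p.1) * W (logPolar p) * w p ^ 2 := by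
        rw [← hu.setIntegral_mul_sq, setIntegral_image_logPolar hS.measurableSet hinj]
        refine setIntegral_congr_fun hS.measurableSet fun p hp => ?_
        simp [hw_def, hp, mul_assoc]
    _ = ∫ p, exp (2 * p.1) * W (logPolar p) * w p ^ 2 := hw.setIntegral_mul_sq _
    _ ≤ ∫ p, (fderiv ℝ w p (1, 0) ^ 2 + fderiv ℝ w p (0, 1) ^ 2) := hW w hw
    _ = ∫ p in S, (fderiv ℝ w p (1, 0) ^ 2 + fderiv ℝ w p (0, 1) ^ 2) :=
        hw.setIntegral_fderiv_sq_add_sq.symm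
    _ = ∫ x, (fderiv ℝ u x (1, 0) ^ 2 + fderiv ℝ u x (0, 1) ^ 2) := by
        rw [← hu.setIntegral_fderiv_sq_add_sq, setIntegral_image_logPolar hS.measurableSet hinj]
        refine setIntegral_congr_fun hS.measurableSet fun p hp => ?_
        simp only [hfderiv p hp]
        exact fderiv_comp_logPolar_sq_add_sq (hu.contDiff.differentiable one_ne_zero _)

/-! ### The curved wedge -/

theorem isOpen_curvedWedge {a : ℝ} {θ : ℝ → ℝ} (hθ : ContinuousOn θ (Ioi 0)) :
    IsOpen (curvedWedge a θ) := by
  rw [curvedWedge_eq_image_logPolar]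
  exact isOpenMap_logPolar _
    (isOpen_twistedStrip (hθ.comp_continuous continuous_exp exp_pos))

theorem enorm2_pos_of_mem_curvedWedge {a : ℝ} {θ : ℝ → ℝ} {x : ℝ × ℝ}
    (hx : x ∈ curvedWedge a θ) : 0 < enorm2 x := by
  rw [curvedWedge_eq_image_logPolar] at hx
  obtain ⟨p, -, rfl⟩ := hx
  exact enorm2_logPolar p ▸ exp_pos _

theorem continuous_enorm2 : Continuous enorm2 := by
  unfold enorm2
  fun_prop

theorem continuousOn_inv_enorm2_sq {a : ℝ} {θ : ℝ → ℝ} :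
    ContinuousOn (fun x => (enorm2 x ^ 2)⁻¹) (curvedWedge a θ) :=
  (continuous_enorm2.pow 2).continuousOn.inv₀ fun _ hx =>
    pow_ne_zero 2 (enorm2_pos_of_mem_curvedWedge hx).ne'

theorem continuousOn_inv_one_add_enorm2_sq_mul_log_sq {a : ℝ} {θ : ℝ → ℝ} :
    ContinuousOn (fun x => (1 + enorm2 x ^ 2 * log (enorm2 x) ^ 2)⁻¹) (curvedWedge a θ) := by
  have hlog : ContinuousOn (fun x => log (enorm2 x)) (curvedWedge a θ) :=
    continuous_enorm2.continuousOn.log fun _ hx => (enorm2_pos_of_mem_curvedWedge hx).ne'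
  exact (((continuous_enorm2.pow 2).continuousOn.mul (hlog.pow 2)).const_add 1).inv₀
    fun x _ => (by positivity : 1 + enorm2 x ^ 2 * log (enorm2 x) ^ 2 ≠ 0)

theorem exp_two_mul_le_mul_inv_one_add_sq (t : ℝ) :
    exp (2 * t) * (1 + exp (2 * t) * t ^ 2)⁻¹ ≤ (exp 2 + 1) * (1 + t ^ 2)⁻¹ := by
  have hexp : 0 < exp (2 * t) := exp_pos _
  have hle : exp (2 * t) ≤ exp 2 + exp (2 * t) * t ^ 2 := by
    rcases le_total t 1 with ht | ht
    · linarith [exp_le_exp.2 (by linarith : 2 * t ≤ 2), mul_nonneg hexp.le (sq_nonneg t)]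
    · linarith [le_mul_of_one_le_right hexp.le (one_le_pow₀ ht : 1 ≤ t ^ 2), exp_pos 2]
  rw [← div_eq_mul_inv, ← div_eq_mul_inv, div_le_div_iff₀ (by positivity) (by positivity)]
  nlinarith [mul_nonneg hexp.le (sq_nonneg t), mul_nonneg (exp_pos 2).le (sq_nonneg t),
    one_le_exp (zero_le_two (α := ℝ))]

theorem isHardyPotential_curvedWedge_of_twistedStrip {a c : ℝ} {θ : ℝ → ℝ} (ha : a ∈ Ioc 0 1)
    (hθ : ContinuousOn θ (Ioi 0)) (hc : 0 ≤ c)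
    (hstrip : IsHardyPotential (twistedStrip (θ ∘ exp) (2 * π * a)) fun p =>
      (π / (2 * π * a)) ^ 2 + c / (1 + p.1 ^ 2)) :
    IsHardyPotential (curvedWedge a θ) fun x => 1 / (4 * a ^ 2) * (enorm2 x ^ 2)⁻¹ +
      c / (exp 2 + 1) * (1 + enorm2 x ^ 2 * log (enorm2 x) ^ 2)⁻¹ := by
  obtain ⟨ha₀, ha₁⟩ := ha
  have hopen : IsOpen (twistedStrip (θ ∘ exp) (2 * π * a)) :=
    isOpen_twistedStrip (hθ.comp_continuous continuous_exp exp_pos)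
  rw [curvedWedge_eq_image_logPolar]
  refine IsHardyPotential.image_logPolar ?_ hopen
    (injOn_logPolar_twistedStrip (mul_le_of_le_one_right two_pi_pos.le ha₁))
  have hpullback : ∀ p : ℝ × ℝ, exp (2 * p.1) * (1 / (4 * a ^ 2) * (enorm2 (logPolar p) ^ 2)⁻¹ +
      c / (exp 2 + 1) * (1 + enorm2 (logPolar p) ^ 2 * log (enorm2 (logPolar p)) ^ 2)⁻¹) =
      (π / (2 * π * a)) ^ 2 +
        c / (exp 2 + 1) * (exp (2 * p.1) * (1 + exp (2 * p.1) * p.1 ^ 2)⁻¹) := fun p => by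
    rw [enorm2_logPolar, log_exp, ← exp_nat_mul, Nat.cast_ofNat]
    field_simp
    ring
  simp only [hpullback]
  refine hstrip.mono hopen (Continuous.continuousOn ?_) (Continuous.continuousOn ?_) fun p _ => ?_
  · fun_prop (disch := intro; positivity)
  · fun_prop (disch := intro; positivity)
  · grw [exp_two_mul_le_mul_inv_one_add_sq, ← mul_assoc, div_mul_cancel₀ _ (by positivity),
      ← div_eq_mul_inv]

theorem exists_isHardyPotential_curvedWedge {a : ℝ} {θ θ' : ℝ → ℝ} (ha : a ∈ Ioc 0 1)
    (hderiv : ∀ r ∈ Ioi 0, HasDerivAt θ (θ' r) r) (hcont : ContinuousOn θ' (Ioi 0))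
    (hne : ∃ r ∈ Ioi 0, θ' r ≠ 0) :
    ∃ c > 0, IsHardyPotential (curvedWedge a θ) fun x =>
      1 / (4 * a ^ 2) * (enorm2 x ^ 2)⁻¹ + c * (1 + enorm2 x ^ 2 * log (enorm2 x) ^ 2)⁻¹ := by
  obtain ⟨r, hr, hθr⟩ := hne
  have hϑ : ∀ t, HasDerivAt (θ ∘ exp) (θ' (exp t) * exp t) t := fun t =>
    (hderiv _ (exp_pos t)).comp t (hasDerivAt_exp t)
  have hϑ' : Continuous fun t => θ' (exp t) * exp t :=
    (hcont.comp_continuous continuous_exp exp_pos).mul continuous_exp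
  obtain ⟨c, hc, hstrip⟩ := exists_isHardyPotential_twistedStrip hϑ hϑ'
    ⟨log r, by simpa [exp_log hr] using ⟨hθr, (mem_Ioi.1 hr).ne'⟩⟩
    (mul_pos two_pi_pos ha.1)
  exact ⟨c / (exp 2 + 1), by positivity, isHardyPotential_curvedWedge_of_twistedStrip ha
    (fun r hr => (hderiv r hr).continuousAt.continuousWithinAt) hc.le hstrip⟩

theorem improved_hardy_curved_wedge_general {a : ℝ} {θ θ' : ℝ → ℝ} (ha : a ∈ Ioc 0 1)
    (hderiv : ∀ r ∈ Ioi 0, HasDerivAt θ (θ' r) r) (hcont : ContinuousOn θ' (Ioi 0))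
    (hne : ∃ r ∈ Ioi 0, θ' r ≠ 0) :
    ∃ c > 0, ∀ u : ℝ × ℝ → ℝ,
      ContDiff ℝ 1 u → HasCompactSupport u → tsupport u ⊆ curvedWedge a θ →
      (∫ x in curvedWedge a θ, (fderiv ℝ u x (1, 0) ^ 2 + fderiv ℝ u x (0, 1) ^ 2))
          - (1 / (4 * a ^ 2)) * ∫ x in curvedWedge a θ, u x ^ 2 / enorm2 x ^ 2
        ≥ c * ∫ x in curvedWedge a θ, u x ^ 2 / (1 + enorm2 x ^ 2 * log (enorm2 x) ^ 2) := by
  obtain ⟨c, hc, hhardy⟩ := exists_isHardyPotential_curvedWedge ha hderiv hcont hne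
  refine ⟨c, hc, fun u hu hcompact hsub => ?_⟩
  have htest : IsTestFunction (curvedWedge a θ) u := ⟨hu, hcompact, hsub⟩
  have hopen : IsOpen (curvedWedge a θ) :=
    isOpen_curvedWedge fun r hr => (hderiv r hr).continuousAt.continuousWithinAt
  have hle := hhardy u htest
  rw [htest.integral_linearComb_mul_sq hopen continuousOn_inv_enorm2_sq
    continuousOn_inv_one_add_enorm2_sq_mul_log_sq] at hle
  simp only [div_eq_inv_mul (u _ ^ 2), htest.setIntegral_mul_sq,
    htest.setIntegral_fderiv_sq_add_sq]
  linarith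

/-- **Improved Hardy inequality in a non-trivially curved wedge.**
If `a ∈ (0,1]`, `θ ∈ C¹([0,∞))`, `θ'` has compact support and is not identically zero,
then there is `c > 0` such that for every `C¹` function `u` with compact support in the
curved wedge `Ω`,
`∫_Ω |∇u|² - (1/(4a²)) ∫_Ω u²/|x|² ≥ c ∫_Ω u²/(1 + |x|² log²|x|)`. -/
theorem improved_hardy_curved_wedge
    (a : ℝ) (ha : a ∈ Ioc (0:ℝ) 1)
    (θ θ' : ℝ → ℝ)
    (hderiv : ∀ r ∈ Ici (0:ℝ), HasDerivWithinAt θ (θ' r) (Ici 0) r)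
    (hcont : ContinuousOn θ' (Ici 0))
    (hsupp : HasCompactSupport θ')
    (hne : ∃ r ∈ Ioi (0:ℝ), θ' r ≠ 0) :
    ∃ c > 0, ∀ u : ℝ × ℝ → ℝ,
      ContDiff ℝ 1 u → HasCompactSupport u → tsupport u ⊆ curvedWedge a θ →
      (∫ x in curvedWedge a θ, ((fderiv ℝ u x (1, 0)) ^ 2 + (fderiv ℝ u x (0, 1)) ^ 2))
          - (1 / (4 * a ^ 2)) * ∫ x in curvedWedge a θ, (u x) ^ 2 / enorm2 x ^ 2
        ≥ c * ∫ x in curvedWedge a θ,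
            (u x) ^ 2 / (1 + enorm2 x ^ 2 * (Real.log (enorm2 x)) ^ 2) :=
  improved_hardy_curved_wedge_general ha
    (fun r hr => (hderiv r (mem_Ioi.1 hr).le).hasDerivAt (Ici_mem_nhds hr))
    (hcont.mono Ioi_subset_Ici_self) hne
end
end

section
/- Let a ∈ (0,1] and let θ ∈ C¹((0,∞)). Then for every continuously differentiable function u with compact support in Ω one has ∫_Ω |∇u(x)|² dx ≥ (1/(4a²)) ∫_Ω |u(x)|²/|x|² dx. -/
open MeasureTheory Real Set

noncomputable section

/-!
On each circle `|x| = r` the wedge cuts out an arc of angular length `2πa`, and `u` vanishes at its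
endpoints. The one-dimensional Wirtinger inequality on that arc has constant
`(π / (2πa))² = 1 / (4a²)` and bounds the integral of `u²` by that of `|∂_φ u|² ≤ r² |∇u|²`;
multiplying by `r⁻²` and integrating over `r` in polar coordinates gives the result. The twist
`θ r` merely rotates the arc on its circle.
-/

open scoped ENNReal Topology

lemma periodic_deriv {𝕜 E : Type*} [NontriviallyNormedField 𝕜] [NormedAddCommGroup E]
    [NormedSpace 𝕜 E] {g : 𝕜 → E} {T : 𝕜} (hg : g.Periodic T) : (deriv g).Periodic T := fun x ↦ by
  rw [← deriv_comp_add_const, hg.funext]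

section Wirtinger

variable {F : Type*} [NormedAddCommGroup F] [InnerProductSpace ℝ F] {g g' : ℝ → F} {α β : ℝ}

/- The derivative of `t ‖g‖²` is `q ‖g‖² + ‖g' + t g‖² - ‖g'‖²`, and `t ‖g‖²` vanishes at both
endpoints. -/
lemma integral_mul_norm_sq_le_of_riccati {q t : ℝ → ℝ} (hαβ : α ≤ β)
    (hg : ContinuousOn g (Icc α β)) (hderiv : ∀ x ∈ Ioo α β, HasDerivAt g (g' x) x)
    (hg' : ContinuousOn g' (Icc α β)) (hα : g α = 0) (hβ : g β = 0)
    (hq : ContinuousOn q (Icc α β)) (ht : ContinuousOn t (Icc α β))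
    (hriccati : ∀ x ∈ Ioo α β, HasDerivAt t (q x + t x ^ 2) x) :
    ∫ x in α..β, q x * ‖g x‖ ^ 2 ≤ ∫ x in α..β, ‖g' x‖ ^ 2 := by
  have hint {f : ℝ → ℝ} (hf : ContinuousOn f (Icc α β)) : IntervalIntegrable f volume α β :=
    hf.intervalIntegrable_of_Icc hαβ
  have hboundary :
      ∫ x in α..β, (q x * ‖g x‖ ^ 2 + ‖g' x + t x • g x‖ ^ 2 - ‖g' x‖ ^ 2) = 0 := by
    rw [intervalIntegral.integral_eq_sub_of_hasDerivAt_of_le (f := fun x ↦ t x * ‖g x‖ ^ 2) hαβ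
      (by fun_prop) _ (hint (by fun_prop))]
    · simp [hα, hβ]
    · intro x hx
      refine ((hriccati x hx).mul (hderiv x hx).norm_sq).congr_deriv ?_
      rw [norm_add_sq_real, inner_smul_right, norm_smul, mul_pow, norm_eq_abs, sq_abs,
        real_inner_comm]
      ring
  have hsquare : 0 ≤ ∫ x in α..β, ‖g' x + t x • g x‖ ^ 2 :=
    intervalIntegral.integral_nonneg hαβ fun _ _ ↦ by positivity
  rw [intervalIntegral.integral_sub (hint (by fun_prop)) (hint (by fun_prop)),
    intervalIntegral.integral_add (hint (by fun_prop)) (hint (by fun_prop))] at hboundary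
  linarith

lemma cos_mul_sub_midpoint_pos {μ x : ℝ} (hμ : |μ| * (β - α) < π) (hx : x ∈ Icc α β) :
    0 < cos (μ * (x - (α + β) / 2)) := by
  refine cos_pos_of_mem_Ioo (abs_lt.mp ?_)
  have hdist : |x - (α + β) / 2| ≤ (β - α) / 2 :=
    abs_le.mpr ⟨by linarith [hx.1], by linarith [hx.2]⟩
  calc |μ * (x - (α + β) / 2)| = |μ| * |x - (α + β) / 2| := abs_mul ..
    _ ≤ |μ| * ((β - α) / 2) := by gcongr
    _ < π / 2 := by linarith

lemma sq_mul_integral_norm_sq_le_of_abs_mul_lt_pi {μ : ℝ} (hαβ : α ≤ β)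
    (hμ : |μ| * (β - α) < π) (hg : ContinuousOn g (Icc α β))
    (hderiv : ∀ x ∈ Ioo α β, HasDerivAt g (g' x) x) (hg' : ContinuousOn g' (Icc α β))
    (hα : g α = 0) (hβ : g β = 0) :
    μ ^ 2 * ∫ x in α..β, ‖g x‖ ^ 2 ≤ ∫ x in α..β, ‖g' x‖ ^ 2 := by
  have htan {x : ℝ} (hx : x ∈ Icc α β) :
      HasDerivAt (fun y ↦ μ * tan (μ * (y - (α + β) / 2)))
        (μ ^ 2 + (μ * tan (μ * (x - (α + β) / 2))) ^ 2) x := by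
    have hcos := (cos_mul_sub_midpoint_pos hμ hx).ne'
    have hlin : HasDerivAt (fun y ↦ μ * (y - (α + β) / 2)) μ x := by
      simpa using ((hasDerivAt_id x).sub_const ((α + β) / 2)).const_mul μ
    refine (((hasDerivAt_tan hcos).comp x hlin).const_mul μ).congr_deriv ?_
    rw [one_div, ← inv_one_add_tan_sq hcos, inv_inv]
    ring
  rw [← intervalIntegral.integral_const_mul]
  exact integral_mul_norm_sq_le_of_riccati hαβ hg hderiv hg' hα hβ continuousOn_const
    (fun x hx ↦ (htan hx).continuousAt.continuousWithinAt) fun x hx ↦ htan (Ioo_subset_Icc_self hx)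

/- At `μ = π / (β - α)` the tangent blows up at the endpoints, so this value is reached as a limit
from below. -/
theorem wirtinger_inequality (hαβ : α < β) (hg : ContinuousOn g (Icc α β))
    (hderiv : ∀ x ∈ Ioo α β, HasDerivAt g (g' x) x) (hg' : ContinuousOn g' (Icc α β))
    (hα : g α = 0) (hβ : g β = 0) :
    (π / (β - α)) ^ 2 * ∫ x in α..β, ‖g x‖ ^ 2 ≤ ∫ x in α..β, ‖g' x‖ ^ 2 := by
  have hlength : 0 < β - α := sub_pos.mpr hαβ
  have hlim : Filter.Tendsto (fun μ : ℝ ↦ μ ^ 2 * ∫ x in α..β, ‖g x‖ ^ 2)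
      (𝓝[<] (π / (β - α))) (𝓝 ((π / (β - α)) ^ 2 * ∫ x in α..β, ‖g x‖ ^ 2)) :=
    (Continuous.tendsto (by fun_prop) _).mono_left nhdsWithin_le_nhds
  refine le_of_tendsto hlim ?_
  filter_upwards [Ioo_mem_nhdsLT (div_pos pi_pos hlength)] with μ hμ
  refine sq_mul_integral_norm_sq_le_of_abs_mul_lt_pi hαβ.le ?_ hg hderiv hg' hα hβ
  rw [abs_of_pos hμ.1]
  exact (lt_div_iff₀ hlength).mp hμ.2

theorem wirtinger_inequality_of_periodic {L T : ℝ} (hL : 0 < L) (hLT : L ≤ T)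
    (hg : ContDiff ℝ 1 g) (hper : g.Periodic T) (hzero : ∀ x ∈ Icc (α + L) (α + T), g x = 0)
    (s : ℝ) :
    (π / L) ^ 2 * ∫ x in s..s + T, ‖g x‖ ^ 2 ≤ ∫ x in s..s + T, ‖deriv g x‖ ^ 2 := by
  have hg_cont : Continuous g := hg.continuous
  have hg'_cont : Continuous (deriv g) := hg.continuous_deriv_one
  have hα : g α = 0 := by
    rw [← hper]
    exact hzero _ (right_mem_Icc.mpr (by linarith))
  have harc : ∫ x in (α + L)..(α + T), ‖g x‖ ^ 2 = 0 := by
    rw [intervalIntegral.integral_congr (g := 0) fun x hx ↦ ?_]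
    · simp
    · simp [hzero x (uIcc_of_le (add_le_add_right hLT α) ▸ hx)]
  have hwirtinger := wirtinger_inequality (lt_add_of_pos_right α hL) hg_cont.continuousOn
    (fun x _ ↦ (hg.differentiable one_ne_zero x).hasDerivAt) hg'_cont.continuousOn hα
    (hzero _ (left_mem_Icc.mpr (by linarith)))
  rw [add_sub_cancel_left] at hwirtinger
  calc (π / L) ^ 2 * ∫ x in s..s + T, ‖g x‖ ^ 2
      = (π / L) ^ 2 * ∫ x in α..α + T, ‖g x‖ ^ 2 :=
        congrArg _ ((hper.comp (‖·‖ ^ 2)).intervalIntegral_add_eq s α)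
    _ = (π / L) ^ 2 * ∫ x in α..α + L, ‖g x‖ ^ 2 := by
        rw [← intervalIntegral.integral_add_adjacent_intervals (b := α + L), harc, add_zero] <;>
          exact Continuous.intervalIntegrable (by fun_prop) _ _
    _ ≤ ∫ x in α..α + L, ‖deriv g x‖ ^ 2 := hwirtinger
    _ ≤ ∫ x in α..α + T, ‖deriv g x‖ ^ 2 :=
        intervalIntegral.integral_mono_interval le_rfl (by linarith) (by linarith)
          (.of_forall fun _ ↦ by positivity) (Continuous.intervalIntegrable (by fun_prop) _ _)
    _ = ∫ x in s..s + T, ‖deriv g x‖ ^ 2 :=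
        ((periodic_deriv hper).comp (‖·‖ ^ 2)).intervalIntegral_add_eq α s

end Wirtinger

section Gradient

variable {F : Type*} [NormedAddCommGroup F] [NormedSpace ℝ F] {u : ℝ × ℝ → F}

/-- The squared Euclidean norm `|∇u|²` of the derivative of `u`. It is not the square of the
operator norm of `fderiv ℝ u x`, which refers to the sup norm on `ℝ × ℝ`. -/
def gradNormSq (u : ℝ × ℝ → F) (x : ℝ × ℝ) : ℝ :=
  ‖fderiv ℝ u x (1, 0)‖ ^ 2 + ‖fderiv ℝ u x (0, 1)‖ ^ 2

lemma gradNormSq_nonneg (u : ℝ × ℝ → F) (x : ℝ × ℝ) : 0 ≤ gradNormSq u x := by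
  unfold gradNormSq
  positivity

lemma continuous_gradNormSq (hu : ContDiff ℝ 1 u) : Continuous (gradNormSq u) := by
  have := hu.continuous_fderiv one_ne_zero
  unfold gradNormSq
  fun_prop

lemma support_gradNormSq_subset (u : ℝ × ℝ → F) :
    Function.support (gradNormSq u) ⊆ tsupport u := by
  refine Function.support_subset_iff'.mpr fun x hx ↦ ?_
  simp [gradNormSq, fderiv_of_notMem_tsupport ℝ hx]

lemma integrable_gradNormSq (hu : ContDiff ℝ 1 u) (hcompact : HasCompactSupport u) :
    Integrable (gradNormSq u) :=
  (continuous_gradNormSq hu).integrable_of_hasCompactSupport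
    (hcompact.mono' (support_gradNormSq_subset u))

lemma norm_sq_apply_prod_le (L : ℝ × ℝ →ₗ[ℝ] F) (v : ℝ × ℝ) :
    ‖L v‖ ^ 2 ≤ (v.1 ^ 2 + v.2 ^ 2) * (‖L (1, 0)‖ ^ 2 + ‖L (0, 1)‖ ^ 2) := by
  have hv : L v = v.1 • L (1, 0) + v.2 • L (0, 1) := by
    rw [← map_smul, ← map_smul, ← map_add]
    simp
  have htriangle : ‖L v‖ ≤ |v.1| * ‖L (1, 0)‖ + |v.2| * ‖L (0, 1)‖ := by
    rw [hv]
    exact (norm_add_le _ _).trans_eq (by simp only [norm_smul, norm_eq_abs])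
  calc ‖L v‖ ^ 2 ≤ (|v.1| * ‖L (1, 0)‖ + |v.2| * ‖L (0, 1)‖) ^ 2 := by gcongr
    _ ≤ (|v.1| ^ 2 + |v.2| ^ 2) * (‖L (1, 0)‖ ^ 2 + ‖L (0, 1)‖ ^ 2) := by
        linarith [sq_nonneg (|v.1| * ‖L (0, 1)‖ - |v.2| * ‖L (1, 0)‖)]
    _ = (v.1 ^ 2 + v.2 ^ 2) * (‖L (1, 0)‖ ^ 2 + ‖L (0, 1)‖ ^ 2) := by simp only [sq_abs]

lemma hasDerivAt_polarCoord_symm_snd (r φ : ℝ) :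
    HasDerivAt (fun ψ ↦ polarCoord.symm (r, ψ)) (r * -sin φ, r * cos φ) φ :=
  ((hasDerivAt_cos φ).const_mul r).prodMk ((hasDerivAt_sin φ).const_mul r)

lemma norm_sq_deriv_comp_polarCoord_symm_le {r φ : ℝ}
    (hu : DifferentiableAt ℝ u (polarCoord.symm (r, φ))) :
    ‖deriv (fun ψ ↦ u (polarCoord.symm (r, ψ))) φ‖ ^ 2 ≤
      r ^ 2 * gradNormSq u (polarCoord.symm (r, φ)) := by
  have hchain : HasDerivAt (fun ψ ↦ u (polarCoord.symm (r, ψ)))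
      (fderiv ℝ u (polarCoord.symm (r, φ)) (r * -sin φ, r * cos φ)) φ :=
    hu.hasFDerivAt.comp_hasDerivAt φ (hasDerivAt_polarCoord_symm_snd r φ)
  have hradius : (r * -sin φ) ^ 2 + (r * cos φ) ^ 2 = r ^ 2 := by
    linear_combination r ^ 2 * sin_sq_add_cos_sq φ
  rw [← hradius, hchain.deriv]
  exact norm_sq_apply_prod_le (fderiv ℝ u (polarCoord.symm (r, φ))).toLinearMap _

end Gradient

section Polar

@[fun_prop]
lemma measurable_enorm2 : Measurable enorm2 := by
  unfold enorm2
  fun_prop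

lemma enorm2_polarCoord_symm (p : ℝ × ℝ) : enorm2 (polarCoord.symm p) = |p.1| := by
  rw [enorm2, polarCoord_symm_apply, ← sqrt_sq_eq_abs]
  congr 1
  linear_combination p.1 ^ 2 * sin_sq_add_cos_sq p.2

lemma periodic_polarCoord_symm_snd (r : ℝ) :
    Function.Periodic (fun φ ↦ polarCoord.symm (r, φ)) (2 * π) := fun φ ↦ by
  simp only [polarCoord_symm_apply, cos_add_two_pi, sin_add_two_pi]

lemma contDiff_polarCoord_symm_snd {n : WithTop ℕ∞} (r : ℝ) :
    ContDiff ℝ n (fun φ ↦ polarCoord.symm (r, φ)) := by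
  simp only [polarCoord_symm_apply]
  fun_prop

lemma lintegral_le_lintegral_of_circles {f g : ℝ × ℝ → ℝ≥0∞} (hg : Measurable g)
    (hcircle : ∀ r > 0, ∫⁻ φ in Ioo (-π) π, f (polarCoord.symm (r, φ)) ≤
      ∫⁻ φ in Ioo (-π) π, g (polarCoord.symm (r, φ))) :
    ∫⁻ x, f x ≤ ∫⁻ x, g x := by
  have hmeas : Measurable fun p : ℝ × ℝ ↦ ENNReal.ofReal p.1 • g (polarCoord.symm p) :=
    measurable_fst.ennreal_ofReal.smul (hg.comp continuous_polarCoord_symm.measurable)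
  rw [← lintegral_comp_polarCoord_symm f, ← lintegral_comp_polarCoord_symm g, polarCoord_target,
    Measure.volume_eq_prod, setLIntegral_prod _ hmeas.aemeasurable, ← Measure.prod_restrict]
  refine (lintegral_prod_le _).trans (setLIntegral_mono' measurableSet_Ioi fun r hr ↦ ?_)
  simp only [smul_eq_mul]
  rw [lintegral_const_mul' _ _ ENNReal.ofReal_ne_top,
    lintegral_const_mul' _ _ ENNReal.ofReal_ne_top]
  gcongr ENNReal.ofReal r * ?_
  exact hcircle r hr

lemma setLIntegral_Ioo_ofReal {f : ℝ → ℝ} {a b : ℝ} (hab : a ≤ b)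
    (hf : IntervalIntegrable f volume a b) (hf_nonneg : 0 ≤ f) :
    ∫⁻ x in Ioo a b, ENNReal.ofReal (f x) = ENNReal.ofReal (∫ x in a..b, f x) := by
  rw [intervalIntegral.integral_of_le hab, integral_Ioc_eq_integral_Ioo,
    ofReal_integral_eq_lintegral_ofReal ((intervalIntegrable_iff_integrableOn_Ioo_of_le hab).mp hf)
      (.of_forall hf_nonneg)]

end Polar

section CurvedWedge

variable {F : Type*} [NormedAddCommGroup F] [InnerProductSpace ℝ F]
  {a : ℝ} {θ : ℝ → ℝ} {u : ℝ × ℝ → F}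

lemma polarCoord_symm_notMem_curvedWedge {r φ : ℝ} (hr : 0 < r)
    (hφ : φ ∈ Icc (θ r + 2 * π * a) (θ r + 2 * π)) :
    polarCoord.symm (r, φ) ∉ curvedWedge a θ := by
  rintro ⟨ρ, hρ : 0 < ρ, ψ, ⟨hψ_pos, hψ_lt⟩, heq⟩
  obtain rfl : r = ρ := by
    have hnorm := congrArg enorm2 heq
    rwa [← polarCoord_symm_apply (ρ, ψ + θ ρ), enorm2_polarCoord_symm, enorm2_polarCoord_symm,
      abs_of_pos hr, abs_of_pos hρ] at hnorm
  obtain ⟨hcos, hsin⟩ : cos φ = cos (ψ + θ r) ∧ sin φ = sin (ψ + θ r) := by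
    simpa only [polarCoord_symm_apply, Prod.mk.injEq, mul_right_inj' hr.ne'] using heq
  have hcos_sub : cos (φ - (ψ + θ r)) = 1 := by
    rw [cos_sub, hcos, hsin]
    linear_combination sin_sq_add_cos_sq (ψ + θ r)
  have hsub := (cos_eq_one_iff_of_lt_of_lt (by linarith [hφ.1, pi_pos])
    (by linarith [hφ.2])).mp hcos_sub
  linarith [hφ.1]

lemma hardy_on_circle (ha : a ∈ Ioc (0 : ℝ) 1) (hu : ContDiff ℝ 1 u)
    (hsupp : Function.support u ⊆ curvedWedge a θ) {r : ℝ} (hr : 0 < r) :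
    1 / (4 * a ^ 2) * ∫ φ in -π..π, ‖u (polarCoord.symm (r, φ))‖ ^ 2 ≤
      r ^ 2 * ∫ φ in -π..π, gradNormSq u (polarCoord.symm (r, φ)) := by
  have hv : ContDiff ℝ 1 fun φ ↦ u (polarCoord.symm (r, φ)) :=
    hu.comp (contDiff_polarCoord_symm_snd r)
  have hcircle := (contDiff_polarCoord_symm_snd (n := 1) r).continuous
  have hgrad := (continuous_gradNormSq hu).comp hcircle
  have hzero : ∀ φ ∈ Icc (θ r + 2 * π * a) (θ r + 2 * π), u (polarCoord.symm (r, φ)) = 0 :=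
    fun φ hφ ↦ Function.notMem_support.mp fun h ↦ polarCoord_symm_notMem_curvedWedge hr hφ (hsupp h)
  have hwirtinger := wirtinger_inequality_of_periodic (mul_pos two_pi_pos ha.1)
    (mul_le_of_le_one_right two_pi_pos.le ha.2) hv ((periodic_polarCoord_symm_snd r).comp u)
    hzero (-π)
  have hconst : (π / (2 * π * a)) ^ 2 = 1 / (4 * a ^ 2) := by
    have := ha.1.ne'
    field_simp
    norm_num
  rw [hconst, show -π + 2 * π = π by ring] at hwirtinger
  have hv' := hv.continuous_deriv_one
  calc 1 / (4 * a ^ 2) * ∫ φ in -π..π, ‖u (polarCoord.symm (r, φ))‖ ^ 2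
      ≤ ∫ φ in -π..π, ‖deriv (fun ψ ↦ u (polarCoord.symm (r, ψ))) φ‖ ^ 2 := hwirtinger
    _ ≤ ∫ φ in -π..π, r ^ 2 * gradNormSq u (polarCoord.symm (r, φ)) :=
        intervalIntegral.integral_mono (by linarith [pi_pos])
          (Continuous.intervalIntegrable (by fun_prop) _ _)
          ((hgrad.const_mul (r ^ 2)).intervalIntegrable _ _)
          fun φ ↦ norm_sq_deriv_comp_polarCoord_symm_le (hu.differentiable one_ne_zero _)
    _ = r ^ 2 * ∫ φ in -π..π, gradNormSq u (polarCoord.symm (r, φ)) :=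
        intervalIntegral.integral_const_mul ..

theorem lintegral_hardy_of_support_subset_curvedWedge (ha : a ∈ Ioc (0 : ℝ) 1)
    (hu : ContDiff ℝ 1 u) (hsupp : Function.support u ⊆ curvedWedge a θ) :
    ∫⁻ x, ENNReal.ofReal (1 / (4 * a ^ 2) * (‖u x‖ ^ 2 / enorm2 x ^ 2)) ≤
      ∫⁻ x, ENNReal.ofReal (gradNormSq u x) := by
  refine lintegral_le_lintegral_of_circles
    (continuous_gradNormSq hu).measurable.ennreal_ofReal fun r hr ↦ ?_
  have hcircle := (contDiff_polarCoord_symm_snd (n := 1) r).continuous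
  have hgrad : Continuous fun φ ↦ gradNormSq u (polarCoord.symm (r, φ)) :=
    (continuous_gradNormSq hu).comp hcircle
  have hu_cont := hu.continuous
  have hpi : -π ≤ π := by linarith [pi_pos]
  simp only [enorm2_polarCoord_symm, sq_abs]
  rw [setLIntegral_Ioo_ofReal hpi (Continuous.intervalIntegrable (by fun_prop) _ _)
      fun φ ↦ by positivity,
    setLIntegral_Ioo_ofReal hpi (hgrad.intervalIntegrable _ _) fun φ ↦ gradNormSq_nonneg u _]
  refine ENNReal.ofReal_le_ofReal ?_
  rw [intervalIntegral.integral_const_mul, intervalIntegral.integral_div, ← mul_div_assoc,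
    div_le_iff₀' (by positivity)]
  exact hardy_on_circle ha hu hsupp hr

theorem immediate_hardy_curved_wedge_general (ha : a ∈ Ioc (0 : ℝ) 1) (hu : ContDiff ℝ 1 u)
    (hsupp : tsupport u ⊆ curvedWedge a θ)
    (henergy : IntegrableOn (gradNormSq u) (curvedWedge a θ)) :
    1 / (4 * a ^ 2) * ∫ x in curvedWedge a θ, ‖u x‖ ^ 2 / enorm2 x ^ 2 ≤
      ∫ x in curvedWedge a θ, gradNormSq u x := by
  have hgrad_supp := (support_gradNormSq_subset u).trans hsupp
  have hu_supp := (subset_tsupport u).trans hsupp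
  have hu_meas : Measurable fun x ↦ ‖u x‖ := hu.continuous.norm.measurable
  have hhardy_meas : Measurable fun x ↦ 1 / (4 * a ^ 2) * (‖u x‖ ^ 2 / enorm2 x ^ 2) := by
    fun_prop
  rw [integrableOn_iff_integrable_of_support_subset hgrad_supp] at henergy
  rw [setIntegral_eq_integral_of_forall_compl_eq_zero (Function.support_subset_iff'.mp hgrad_supp),
    setIntegral_eq_integral_of_forall_compl_eq_zero fun x hx ↦ by
      simp [Function.support_subset_iff'.mp hu_supp x hx],
    ← integral_const_mul,
    integral_eq_lintegral_of_nonneg_ae (.of_forall fun x ↦ by positivity)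
      hhardy_meas.aestronglyMeasurable,
    integral_eq_lintegral_of_nonneg_ae (.of_forall (gradNormSq_nonneg u)) henergy.1]
  exact ENNReal.toReal_mono henergy.lintegral_lt_top.ne
    (lintegral_hardy_of_support_subset_curvedWedge ha hu hu_supp)

end CurvedWedge

/-- **The immediate Hardy inequality in a curved wedge.**
For `a ∈ (0,1]` and `θ ∈ C¹((0,∞))`, every `C¹` function `u` with compact support in the
curved wedge `Ω` satisfies `∫_Ω |∇u|² ≥ (1/(4a²)) ∫_Ω u²/|x|²`. -/
theorem immediate_hardy_curved_wedge
    (a : ℝ) (ha : a ∈ Ioc (0:ℝ) 1)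
    (θ θ' : ℝ → ℝ)
    (hderiv : ∀ r ∈ Ioi (0:ℝ), HasDerivAt θ (θ' r) r)
    (hcont : ContinuousOn θ' (Ioi 0)) :
    ∀ u : ℝ × ℝ → ℝ,
      ContDiff ℝ 1 u → HasCompactSupport u → tsupport u ⊆ curvedWedge a θ →
      (∫ x in curvedWedge a θ, ((fderiv ℝ u x (1, 0)) ^ 2 + (fderiv ℝ u x (0, 1)) ^ 2))
        ≥ (1 / (4 * a ^ 2)) * ∫ x in curvedWedge a θ, (u x) ^ 2 / enorm2 x ^ 2 := by
  intro u hu hcompact hsupp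
  simpa only [gradNormSq, norm_eq_abs, sq_abs] using
    immediate_hardy_curved_wedge_general ha hu hsupp
      (integrable_gradNormSq hu hcompact).integrableOn
end
end

section
/- Let a ∈ (0,1] and let Ω₀ := { (r cos φ, r sin φ) : r ∈ (0,∞), φ ∈ (0,2πa) } be the straight wedge. For every smooth function V with compact support in Ω₀ satisfying V ≥ 0 and V not identically zero, there exists a smooth function u with compact support in Ω₀ such that ∫_{Ω₀} |∇u(x)|² dx − (1/(4a²)) ∫_{Ω₀} |u(x)|²/|x|² dx − ∫_{Ω₀} V(x) |u(x)|² dx < 0. -/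
open MeasureTheory Real Set

noncomputable section

/-- The straight wedge of opening angle `2πa`. -/
def straightWedge (a : ℝ) : Set (ℝ × ℝ) :=
  {x | ∃ r ∈ Ioi (0:ℝ), ∃ φ ∈ Ioo (0:ℝ) (2 * π * a),
    x = (r * Real.cos φ, r * Real.sin φ)}

/-!
Log-polar coordinates `x = e ^ t (cos φ, sin φ)` are conformal, so they turn the Hardy form of the
wedge into `∫ |∇f|² - (4a²)⁻¹ ∫ f²` on the strip `ℝ × (0, 2πa)`. The first Dirichlet eigenvalue of
the cross-section `(0, 2πa)` is `(4a²)⁻¹`, with eigenfunction `sin (φ / (2a))`. For a product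
`ψ t * χ φ`, with `χ` a smooth truncation of this eigenfunction, the form tends to
`(∫ ψ'²) ∫ sin² (φ / (2a))` as the truncation is removed, and `∫ ψ'²` is as small as we like when
`ψ` is a wide cutoff. Hence there are test functions of arbitrarily small energy which agree with
the ground state `w = sin (φ / (2a)) > 0` on any prescribed compact set `K`. If `V ≥ 0` does not
vanish, choosing `K` of positive measure inside `{V ≠ 0}` gives `∫ V u² ≥ ∫_K V w² > 0`, which
beats the energy of `u`.
-/

open Filter Topology

/-- Log-polar coordinates `(e ^ t * cos φ, e ^ t * sin φ) ↦ (t, φ)`, the angle `φ` being taken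
in `(0, 2π)`. Since the principal branch of the logarithm is cut along the negative half-line, they
are encoded as `z ↦ log (-z) + iπ`. -/
def logPolarCoord : OpenPartialHomeomorph (ℝ × ℝ) (ℝ × ℝ) :=
  ((Complex.equivRealProdCLM.symm.toHomeomorph.trans
      (Homeomorph.neg ℂ)).transOpenPartialHomeomorph
    Complex.expOpenPartialHomeomorph.symm).transHomeomorph
  ((Homeomorph.addRight (π * Complex.I)).trans Complex.equivRealProdCLM.toHomeomorph)

lemma logPolarCoord_symm_apply (p : ℝ × ℝ) :
    logPolarCoord.symm p = (exp p.1 * cos p.2, exp p.1 * sin p.2) := by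
  change Complex.equivRealProd (-Complex.exp (Complex.equivRealProd.symm p + -(π * Complex.I))) = _
  simp [Complex.equivRealProd_apply, ← sub_eq_add_neg, Complex.exp_re, Complex.exp_im]

lemma logPolarCoord_target : logPolarCoord.target = univ ×ˢ Ioo 0 (2 * π) := by
  ext p
  change (Complex.equivRealProd.symm p + -(π * Complex.I)).im ∈ Ioo (-π) π ↔ _
  simp [two_mul]

lemma contDiffAt_logPolarCoord {n : ℕ∞} {x : ℝ × ℝ} (hx : x ∈ logPolarCoord.source) :
    ContDiffAt ℝ n logPolarCoord x := by
  have hx : -Complex.equivRealProdCLM.symm x ∈ Complex.slitPlane := hx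
  exact Complex.equivRealProdCLM.contDiff.contDiffAt.comp x
    ((((Complex.contDiffAt_log hx).restrict_scalars ℝ).comp x
      Complex.equivRealProdCLM.symm.contDiff.neg.contDiffAt).add contDiffAt_const)

/-- The derivative of `logPolarCoord.symm`. -/
def fderivLogPolarCoordSymm (p : ℝ × ℝ) : ℝ × ℝ →L[ℝ] ℝ × ℝ :=
  (Matrix.toLin (.finTwoProd ℝ) (.finTwoProd ℝ)
    !![exp p.1 * cos p.2, -(exp p.1 * sin p.2);
       exp p.1 * sin p.2, exp p.1 * cos p.2]).toContinuousLinearMap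

lemma hasFDerivAt_logPolarCoord_symm (p : ℝ × ℝ) :
    HasFDerivAt logPolarCoord.symm (fderivLogPolarCoordSymm p) p := by
  rw [funext logPolarCoord_symm_apply, fderivLogPolarCoordSymm,
    Matrix.toLin_finTwoProd_toContinuousLinearMap]
  have hexp : HasFDerivAt (fun q : ℝ × ℝ => exp q.1) _ p := hasFDerivAt_fst.exp
  convert! (hexp.mul hasFDerivAt_snd.cos).prodMk (hexp.mul hasFDerivAt_snd.sin) using 2 <;>
    ext <;> simp [mul_comm]

lemma det_fderivLogPolarCoordSymm (p : ℝ × ℝ) :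
    (fderivLogPolarCoordSymm p).det = exp p.1 ^ 2 := by
  simp only [fderivLogPolarCoordSymm, LinearMap.det_toContinuousLinearMap, LinearMap.det_toLin,
    Matrix.det_fin_two_of]
  linear_combination exp p.1 ^ 2 * cos_sq_add_sin_sq p.2

lemma enorm2_logPolarCoord_symm (p : ℝ × ℝ) : enorm2 (logPolarCoord.symm p) = exp p.1 := by
  rw [logPolarCoord_symm_apply, enorm2, sqrt_eq_iff_eq_sq (by positivity) (exp_pos _).le]
  linear_combination exp p.1 ^ 2 * cos_sq_add_sin_sq p.2

/-- The strip `ℝ × (0, 2πa)`, which is `straightWedge a` in log-polar coordinates. -/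
def wedgeStrip (a : ℝ) : Set (ℝ × ℝ) := univ ×ˢ Ioo 0 (2 * π * a)

lemma isOpen_wedgeStrip (a : ℝ) : IsOpen (wedgeStrip a) := isOpen_univ.prod isOpen_Ioo

lemma image_logPolarCoord_symm_wedgeStrip (a : ℝ) :
    logPolarCoord.symm '' wedgeStrip a = straightWedge a := by
  ext x
  simp only [mem_image, logPolarCoord_symm_apply]
  constructor
  · rintro ⟨p, ⟨-, hp⟩, rfl⟩
    exact ⟨exp p.1, exp_pos _, p.2, hp, rfl⟩
  · rintro ⟨r, hr, φ, hφ, rfl⟩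
    exact ⟨(log r, φ), ⟨mem_univ _, hφ⟩, by rw [exp_log hr]⟩

section

variable {a : ℝ} (ha : a ≤ 1)
include ha

lemma wedgeStrip_subset_logPolarCoord_target : wedgeStrip a ⊆ logPolarCoord.target := by
  rw [logPolarCoord_target]
  exact prod_mono_right (Ioo_subset_Ioo_right (mul_le_of_le_one_right two_pi_pos.le ha))

lemma isOpen_straightWedge : IsOpen (straightWedge a) := by
  rw [← image_logPolarCoord_symm_wedgeStrip]
  exact logPolarCoord.symm.isOpen_image_of_subset_source (isOpen_wedgeStrip a)
    (wedgeStrip_subset_logPolarCoord_target ha)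

lemma straightWedge_subset_logPolarCoord_source : straightWedge a ⊆ logPolarCoord.source := by
  rw [← image_logPolarCoord_symm_wedgeStrip]
  exact (image_mono (wedgeStrip_subset_logPolarCoord_target ha)).trans
    logPolarCoord.symm_image_target_eq_source.subset

lemma mapsTo_logPolarCoord_straightWedge :
    MapsTo logPolarCoord (straightWedge a) (wedgeStrip a) := by
  rw [← image_logPolarCoord_symm_wedgeStrip, mapsTo_image_iff]
  intro p hp
  rwa [Function.comp_apply, logPolarCoord.right_inv (wedgeStrip_subset_logPolarCoord_target ha hp)]

lemma setIntegral_straightWedge {E : Type*} [NormedAddCommGroup E] [NormedSpace ℝ E]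
    (f : ℝ × ℝ → E) :
    ∫ x in straightWedge a, f x =
      ∫ p in wedgeStrip a, exp p.1 ^ 2 • f (logPolarCoord.symm p) := by
  rw [← image_logPolarCoord_symm_wedgeStrip, integral_image_eq_integral_abs_det_fderiv_smul volume
    (isOpen_wedgeStrip a).measurableSet
    (fun p _ => (hasFDerivAt_logPolarCoord_symm p).hasFDerivWithinAt)
    (logPolarCoord.symm.injOn.mono (wedgeStrip_subset_logPolarCoord_target ha))]
  simp only [det_fderivLogPolarCoordSymm, abs_sq]

end

lemma continuous_logPolarCoord_symm : Continuous logPolarCoord.symm :=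
  continuous_iff_continuousAt.2 fun p => (hasFDerivAt_logPolarCoord_symm p).continuousAt

lemma contDiff_indicator {𝕜 E F : Type*} [NontriviallyNormedField 𝕜] [NormedAddCommGroup E]
    [NormedSpace 𝕜 E] [NormedAddCommGroup F] [NormedSpace 𝕜 F] {n : WithTop ℕ∞} {g : E → F}
    {U : Set E} (hU : IsOpen U) (hg : ContDiffOn 𝕜 n g U) (hUg : tsupport (U.indicator g) ⊆ U) :
    ContDiff 𝕜 n (U.indicator g) := by
  refine contDiff_iff_contDiffAt.2 fun x => ?_
  by_cases hx : x ∈ tsupport (U.indicator g)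
  · have hxU : U ∈ 𝓝 x := hU.mem_nhds (hUg hx)
    exact (hg.contDiffAt hxU).congr_of_eventuallyEq (eqOn_indicator.eventuallyEq_of_mem hxU)
  · exact contDiffAt_const.congr_of_eventuallyEq (notMem_tsupport_iff_eventuallyEq.1 hx)

/-- The function on `straightWedge a` whose expression in log-polar coordinates is `f`, extended by
zero. -/
def wedgeLift (a : ℝ) (f : ℝ × ℝ → ℝ) : ℝ × ℝ → ℝ :=
  (straightWedge a).indicator (f ∘ logPolarCoord)

section

variable {a : ℝ} {f : ℝ × ℝ → ℝ} (ha : a ≤ 1)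
include ha

lemma wedgeLift_logPolarCoord_symm {p : ℝ × ℝ} (hp : p ∈ wedgeStrip a) :
    wedgeLift a f (logPolarCoord.symm p) = f p := by
  have hmem : logPolarCoord.symm p ∈ straightWedge a :=
    image_logPolarCoord_symm_wedgeStrip a ▸ mem_image_of_mem _ hp
  rw [wedgeLift, indicator_of_mem hmem, Function.comp_apply,
    logPolarCoord.right_inv (wedgeStrip_subset_logPolarCoord_target ha hp)]

lemma wedgeLift_comp_logPolarCoord_symm_eventuallyEq {p : ℝ × ℝ} (hp : p ∈ wedgeStrip a) :
    wedgeLift a f ∘ logPolarCoord.symm =ᶠ[𝓝 p] f := by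
  filter_upwards [(isOpen_wedgeStrip a).mem_nhds hp] with q hq
  exact wedgeLift_logPolarCoord_symm ha hq

variable (hfc : HasCompactSupport f)
include hfc

lemma tsupport_wedgeLift_subset_image :
    tsupport (wedgeLift a f) ⊆ logPolarCoord.symm '' tsupport f := by
  refine closure_minimal (fun x hx => ?_) (hfc.image continuous_logPolarCoord_symm).isClosed
  have hxa : x ∈ straightWedge a := mem_of_indicator_ne_zero hx
  have hxf : f (logPolarCoord x) ≠ 0 := by
    rwa [Function.mem_support, wedgeLift, indicator_of_mem hxa] at hx
  exact ⟨logPolarCoord x, subset_tsupport f hxf,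
    logPolarCoord.left_inv (straightWedge_subset_logPolarCoord_source ha hxa)⟩

lemma hasCompactSupport_wedgeLift : HasCompactSupport (wedgeLift a f) :=
  .of_support_subset_isCompact (hfc.image continuous_logPolarCoord_symm)
    ((subset_tsupport _).trans (tsupport_wedgeLift_subset_image ha hfc))

variable (hfa : tsupport f ⊆ wedgeStrip a)
include hfa

lemma tsupport_wedgeLift_subset : tsupport (wedgeLift a f) ⊆ straightWedge a :=
  (tsupport_wedgeLift_subset_image ha hfc).trans
    (image_logPolarCoord_symm_wedgeStrip a ▸ image_mono hfa)

lemma contDiff_wedgeLift {n : ℕ∞} (hf : ContDiff ℝ n f) : ContDiff ℝ n (wedgeLift a f) := by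
  refine contDiff_indicator (isOpen_straightWedge ha)
    (fun x hx => (hf.contDiffAt.comp x (contDiffAt_logPolarCoord ?_)).contDiffWithinAt)
    (tsupport_wedgeLift_subset ha hfc hfa)
  exact straightWedge_subset_logPolarCoord_source ha hx

end

/-- The squared Euclidean length `|∇u|²` of the gradient of `u`. -/
def gradSq (u : ℝ × ℝ → ℝ) (x : ℝ × ℝ) : ℝ :=
  fderiv ℝ u x (1, 0) ^ 2 + fderiv ℝ u x (0, 1) ^ 2

lemma gradSq_congr {u v : ℝ × ℝ → ℝ} {x : ℝ × ℝ} (h : u =ᶠ[𝓝 x] v) :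
    gradSq u x = gradSq v x := by
  rw [gradSq, gradSq, h.fderiv_eq]

lemma gradSq_comp_logPolarCoord_symm {u : ℝ × ℝ → ℝ} {p : ℝ × ℝ}
    (hu : DifferentiableAt ℝ u (logPolarCoord.symm p)) :
    gradSq (u ∘ logPolarCoord.symm) p = exp p.1 ^ 2 * gradSq u (logPolarCoord.symm p) := by
  have hchain := (hu.hasFDerivAt.comp p (hasFDerivAt_logPolarCoord_symm p)).fderiv
  have hcol₁ : fderivLogPolarCoordSymm p (1, 0) =
      (exp p.1 * cos p.2) • (1, 0) + (exp p.1 * sin p.2) • (0, 1) := by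
    simp [fderivLogPolarCoordSymm]
  have hcol₂ : fderivLogPolarCoordSymm p (0, 1) =
      (-(exp p.1 * sin p.2)) • (1, 0) + (exp p.1 * cos p.2) • (0, 1) := by
    simp [fderivLogPolarCoordSymm]
  simp only [gradSq, hchain, ContinuousLinearMap.comp_apply, hcol₁, hcol₂, map_add, map_smul,
    smul_eq_mul]
  linear_combination exp p.1 ^ 2 * (fderiv ℝ u (logPolarCoord.symm p) (1, 0) ^ 2 +
    fderiv ℝ u (logPolarCoord.symm p) (0, 1) ^ 2) * cos_sq_add_sin_sq p.2

lemma gradSq_mul {ψ χ : ℝ → ℝ} {p : ℝ × ℝ} (hψ : DifferentiableAt ℝ ψ p.1)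
    (hχ : DifferentiableAt ℝ χ p.2) :
    gradSq (fun q => ψ q.1 * χ q.2) p =
      deriv ψ p.1 ^ 2 * χ p.2 ^ 2 + ψ p.1 ^ 2 * deriv χ p.2 ^ 2 := by
  have hprod : HasFDerivAt (fun q : ℝ × ℝ => ψ q.1 * χ q.2) _ p :=
    (hψ.hasFDerivAt.comp p hasFDerivAt_fst).mul (hχ.hasFDerivAt.comp p hasFDerivAt_snd)
  simp only [gradSq, hprod.fderiv, Function.comp_apply, add_apply, smul_apply,
    ContinuousLinearMap.comp_apply, ContinuousLinearMap.coe_snd', fderiv_eq_smul_deriv, smul_eq_mul,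
    zero_mul, mul_zero, ContinuousLinearMap.coe_fst', one_mul, zero_add, add_zero]
  ring

/-- The quadratic form `∫ |∇u|² - (4a²)⁻¹ ∫ |u|² / |x|²` of the Hardy inequality in
`straightWedge a`. -/
def hardyForm (a : ℝ) (u : ℝ × ℝ → ℝ) : ℝ :=
  (∫ x in straightWedge a, gradSq u x) -
    1 / (4 * a ^ 2) * ∫ x in straightWedge a, u x ^ 2 / enorm2 x ^ 2

lemma hardyForm_wedgeLift {a : ℝ} (ha : a ≤ 1) {f : ℝ × ℝ → ℝ} (hf : ContDiff ℝ 1 f)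
    (hfc : HasCompactSupport f) (hfa : tsupport f ⊆ wedgeStrip a) :
    hardyForm a (wedgeLift a f) = (∫ p, gradSq f p) - 1 / (4 * a ^ 2) * ∫ p, f p ^ 2 := by
  have hstrip := (isOpen_wedgeStrip a).measurableSet
  have hdiff : Differentiable ℝ (wedgeLift a f) :=
    (contDiff_wedgeLift ha hfc hfa hf).differentiable one_ne_zero
  have hgrad : ∫ x in straightWedge a, gradSq (wedgeLift a f) x = ∫ p, gradSq f p := by
    have hzero (p) (hp : p ∉ wedgeStrip a) : gradSq f p = 0 := by
      simp [gradSq, fderiv_of_notMem_tsupport ℝ (notMem_subset hfa hp)]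
    rw [setIntegral_straightWedge ha, ← setIntegral_eq_integral_of_forall_compl_eq_zero hzero]
    refine setIntegral_congr_fun hstrip fun p hp => ?_
    rw [← gradSq_congr (wedgeLift_comp_logPolarCoord_symm_eventuallyEq ha hp),
      gradSq_comp_logPolarCoord_symm (hdiff _), smul_eq_mul]
  have hpot : ∫ x in straightWedge a, wedgeLift a f x ^ 2 / enorm2 x ^ 2 = ∫ p, f p ^ 2 := by
    have hzero (p) (hp : p ∉ wedgeStrip a) : f p ^ 2 = 0 := by
      simp [image_eq_zero_of_notMem_tsupport (notMem_subset hfa hp)]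
    rw [setIntegral_straightWedge ha, ← setIntegral_eq_integral_of_forall_compl_eq_zero hzero]
    refine setIntegral_congr_fun hstrip fun p hp => ?_
    simp only [wedgeLift_logPolarCoord_symm ha hp, enorm2_logPolarCoord_symm, smul_eq_mul]
    field_simp
  rw [hardyForm, hgrad, hpot]

lemma integrable_sq_of_hasCompactSupport {X : Type*} [TopologicalSpace X] [MeasurableSpace X]
    [OpensMeasurableSpace X] {μ : Measure X} [IsFiniteMeasureOnCompacts μ] {f : X → ℝ}
    (hf : Continuous f) (hfc : HasCompactSupport f) : Integrable (fun x => f x ^ 2) μ :=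
  (hf.pow 2).integrable_of_hasCompactSupport (hfc.comp_left (zero_pow two_ne_zero))

section

variable {X Y R : Type*} [TopologicalSpace X] [TopologicalSpace Y] [MulZeroClass R]

lemma tsupport_mul_prod_subset (ψ : X → R) (χ : Y → R) :
    tsupport (fun p : X × Y => ψ p.1 * χ p.2) ⊆ tsupport ψ ×ˢ tsupport χ :=
  closure_minimal (fun _ hp => ⟨subset_tsupport ψ (left_ne_zero_of_mul hp),
    subset_tsupport χ (right_ne_zero_of_mul hp)⟩)
    ((isClosed_tsupport ψ).prod (isClosed_tsupport χ))

lemma hasCompactSupport_mul_prod {ψ : X → R} {χ : Y → R} (hψc : HasCompactSupport ψ)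
    (hχc : HasCompactSupport χ) : HasCompactSupport fun p : X × Y => ψ p.1 * χ p.2 :=
  (hψc.isCompact.prod hχc.isCompact).of_isClosed_subset (isClosed_tsupport _)
    (tsupport_mul_prod_subset ψ χ)

end

lemma hardyForm_wedgeLift_mul {a : ℝ} (ha : a ≤ 1) {ψ χ : ℝ → ℝ} (hψ : ContDiff ℝ 1 ψ)
    (hψc : HasCompactSupport ψ) (hχ : ContDiff ℝ 1 χ) (hχc : HasCompactSupport χ)
    (hχa : tsupport χ ⊆ Ioo 0 (2 * π * a)) :
    hardyForm a (wedgeLift a fun p => ψ p.1 * χ p.2) =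
      (∫ t, deriv ψ t ^ 2) * (∫ φ, χ φ ^ 2) + (∫ t, ψ t ^ 2) *
        ((∫ φ, deriv χ φ ^ 2) - 1 / (4 * a ^ 2) * ∫ φ, χ φ ^ 2) := by
  have hint {f : ℝ → ℝ} (hf : ContDiff ℝ 1 f) (hfc : HasCompactSupport f) :
      Integrable (fun t => f t ^ 2) ∧ Integrable fun t => deriv f t ^ 2 :=
    ⟨integrable_sq_of_hasCompactSupport hf.continuous hfc,
      integrable_sq_of_hasCompactSupport (hf.continuous_deriv le_rfl) hfc.deriv⟩
  rw [hardyForm_wedgeLift ha (by fun_prop) (hasCompactSupport_mul_prod hψc hχc)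
    ((tsupport_mul_prod_subset ψ χ).trans (prod_mono (subset_univ _) hχa))]
  simp_rw [gradSq_mul (hψ.differentiable one_ne_zero _) (hχ.differentiable one_ne_zero _), mul_pow]
  rw [Measure.volume_eq_prod, integral_add ((hint hψ hψc).2.mul_prod (hint hχ hχc).1)
    ((hint hψ hψc).1.mul_prod (hint hχ hχc).2),
    integral_prod_mul (fun t => deriv ψ t ^ 2) fun φ => χ φ ^ 2,
    integral_prod_mul (fun t => ψ t ^ 2) fun φ => deriv χ φ ^ 2,
    integral_prod_mul (fun t => ψ t ^ 2) fun φ => χ φ ^ 2]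
  ring

/-- A smooth function vanishing on `(-∞, 1]` and equal to the identity on `[2, ∞)`. -/
def softThreshold (x : ℝ) : ℝ := x * smoothTransition (x - 1)

lemma softThreshold_of_le_one {x : ℝ} (hx : x ≤ 1) : softThreshold x = 0 := by
  rw [softThreshold, smoothTransition.zero_of_nonpos (by linarith), mul_zero]

lemma softThreshold_of_two_le {x : ℝ} (hx : 2 ≤ x) : softThreshold x = x := by
  rw [softThreshold, smoothTransition.one_of_one_le (by linarith), mul_one]

lemma abs_softThreshold_le (x : ℝ) : |softThreshold x| ≤ |x| := by
  rw [softThreshold, abs_mul, abs_of_nonneg (smoothTransition.nonneg _)]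
  exact mul_le_of_le_one_right (abs_nonneg x) (smoothTransition.le_one _)

lemma contDiff_softThreshold {n : ℕ∞} : ContDiff ℝ n softThreshold :=
  contDiff_id.mul (smoothTransition.contDiff.comp (contDiff_id.sub contDiff_const))

lemma continuous_deriv_softThreshold : Continuous (deriv softThreshold) :=
  contDiff_softThreshold.continuous_deriv_one

lemma deriv_softThreshold_of_two_lt {x : ℝ} (hx : 2 < x) : deriv softThreshold x = 1 := by
  have heq : softThreshold =ᶠ[𝓝 x] id := by
    filter_upwards [Ioi_mem_nhds hx] with y hy
    exact softThreshold_of_two_le (le_of_lt hy)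
  rw [heq.deriv_eq, deriv_id]

lemma deriv_softThreshold_of_lt_one {x : ℝ} (hx : x < 1) : deriv softThreshold x = 0 := by
  have heq : softThreshold =ᶠ[𝓝 x] fun _ => 0 := by
    filter_upwards [Iio_mem_nhds hx] with y hy
    exact softThreshold_of_le_one (le_of_lt hy)
  rw [heq.deriv_eq, deriv_const]

lemma exists_abs_deriv_softThreshold_le : ∃ C, ∀ x, |deriv softThreshold x| ≤ C := by
  obtain ⟨C, hC⟩ := isCompact_Icc.exists_bound_of_continuousOn (s := Icc (1 : ℝ) 2)
    continuous_deriv_softThreshold.continuousOn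
  refine ⟨max C 1, fun x => ?_⟩
  rcases lt_or_ge x 1 with hx1 | hx1
  · simp [deriv_softThreshold_of_lt_one hx1]
  rcases le_or_gt x 2 with hx2 | hx2
  · exact (hC x ⟨hx1, hx2⟩).trans (le_max_left C 1)
  · simp [deriv_softThreshold_of_two_lt hx2]

/-- A truncation of the Dirichlet ground state `t ↦ sin (k * t)` of the interval `(0, π / k)`: for
`k, N > 0` it is smooth with compact support in the interval, and unchanged where
`2 / N ≤ sin (k * t)`. -/
def sinTruncation (k N : ℝ) : ℝ → ℝ :=
  (Ioo 0 (π / k)).indicator fun t => softThreshold (N * sin (k * t)) / N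

lemma sinTruncation_of_two_le {k N t : ℝ} (hN : N ≠ 0) (ht : t ∈ Ioo 0 (π / k))
    (hsin : 2 ≤ N * sin (k * t)) : sinTruncation k N t = sin (k * t) := by
  rw [sinTruncation, indicator_of_mem ht, softThreshold_of_two_le hsin, mul_div_cancel_left₀ _ hN]

lemma abs_sinTruncation_le_one (k N t : ℝ) : |sinTruncation k N t| ≤ 1 := by
  by_cases ht : t ∈ Ioo 0 (π / k)
  · rw [sinTruncation, indicator_of_mem ht, abs_div]
    refine div_le_one_of_le₀ ((abs_softThreshold_le _).trans ?_) (abs_nonneg N)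
    rw [abs_mul]
    exact mul_le_of_le_one_right (abs_nonneg N) (abs_sin_le_one _)
  · simp [sinTruncation, indicator_of_notMem ht]

lemma deriv_sinTruncation {k N t : ℝ} (hN : N ≠ 0) (ht : t ∈ Ioo 0 (π / k)) :
    deriv (sinTruncation k N) t = deriv softThreshold (N * sin (k * t)) * (k * cos (k * t)) := by
  have heq : sinTruncation k N =ᶠ[𝓝 t]
      fun s => (softThreshold ∘ fun r => N * sin (k * r)) s / N :=
    eqOn_indicator.eventuallyEq_of_mem (isOpen_Ioo.mem_nhds ht)
  have hinner : HasDerivAt (fun s => N * sin (k * s)) (N * (cos (k * t) * k)) t :=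
    ((hasDerivAt_const_mul k).sin).const_mul N
  have hthreshold : HasDerivAt softThreshold (deriv softThreshold (N * sin (k * t)))
      (N * sin (k * t)) := (contDiff_softThreshold.differentiable one_ne_zero _).hasDerivAt
  rw [heq.deriv_eq, ((hthreshold.comp t hinner).div_const N).deriv]
  field_simp

section

variable {k : ℝ} (hk : 0 < k)
include hk

lemma sin_mul_pos_of_mem_Ioo {t : ℝ} (ht : t ∈ Ioo 0 (π / k)) : 0 < sin (k * t) :=
  sin_pos_of_pos_of_lt_pi (mul_pos hk ht.1) ((lt_div_iff₀' hk).1 ht.2)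

lemma eventually_two_lt_mul_sin {t : ℝ} (ht : t ∈ Ioo 0 (π / k)) :
    ∀ᶠ N in atTop, 2 < N * sin (k * t) :=
  (tendsto_id.atTop_mul_const (sin_mul_pos_of_mem_Ioo hk ht)).eventually_gt_atTop 2

lemma tsupport_sinTruncation_subset (N : ℝ) : tsupport (sinTruncation k N) ⊆ Ioo 0 (π / k) := by
  have hclosed : IsClosed (Icc 0 (π / k) ∩ {t | 1 ≤ N * sin (k * t)}) :=
    isClosed_Icc.inter (isClosed_le (by fun_prop) (by fun_prop))
  refine (closure_minimal (fun t ht => ?_) hclosed).trans fun t ⟨ht, hsin⟩ => ?_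
  · have htI : t ∈ Ioo 0 (π / k) := mem_of_indicator_ne_zero ht
    refine ⟨Ioo_subset_Icc_self htI, le_of_not_gt fun hlt : N * sin (k * t) < 1 => ht ?_⟩
    rw [sinTruncation, indicator_of_mem htI, softThreshold_of_le_one hlt.le, zero_div]
  · refine ⟨ht.1.lt_of_ne ?_, ht.2.lt_of_ne ?_⟩ <;> rintro rfl
    · simp [zero_lt_one.not_ge] at hsin
    · simp [mul_div_cancel₀ π hk.ne', zero_lt_one.not_ge] at hsin

lemma hasCompactSupport_sinTruncation (N : ℝ) : HasCompactSupport (sinTruncation k N) :=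
  isCompact_Icc.of_isClosed_subset (isClosed_tsupport _)
    ((tsupport_sinTruncation_subset hk N).trans Ioo_subset_Icc_self)

lemma contDiff_sinTruncation (N : ℝ) {n : ℕ∞} : ContDiff ℝ n (sinTruncation k N) := by
  refine contDiff_indicator isOpen_Ioo (ContDiff.contDiffOn ?_) (tsupport_sinTruncation_subset hk N)
  exact (contDiff_softThreshold.comp (by fun_prop)).div_const N

lemma tendsto_integral_sinTruncation_sq :
    Tendsto (fun N => ∫ t, sinTruncation k N t ^ 2) atTop
      (𝓝 (∫ t in Ioo 0 (π / k), sin (k * t) ^ 2)) := by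
  have hzero (N t) (ht : t ∉ Ioo 0 (π / k)) : sinTruncation k N t ^ 2 = 0 := by
    simp [sinTruncation, indicator_of_notMem ht]
  rw [← funext fun N => setIntegral_eq_integral_of_forall_compl_eq_zero (hzero N)]
  refine tendsto_integral_filter_of_norm_le_const (.of_forall fun N => ?_)
    ⟨1, .of_forall fun N => .of_forall fun t => ?_⟩ ?_
  · exact ((contDiff_sinTruncation hk N (n := 0)).continuous.pow 2).aestronglyMeasurable
  · rw [norm_pow, norm_eq_abs]
    exact pow_le_one₀ (abs_nonneg _) (abs_sinTruncation_le_one k N t)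
  · refine (ae_restrict_iff' measurableSet_Ioo).2 (.of_forall fun t ht => ?_)
    refine tendsto_nhds_of_eventually_eq ?_
    filter_upwards [eventually_two_lt_mul_sin hk ht, eventually_ne_atTop 0] with N hsin hN
    rw [sinTruncation_of_two_le hN ht hsin.le]

lemma tendsto_integral_deriv_sinTruncation_sq :
    Tendsto (fun N => ∫ t, deriv (sinTruncation k N) t ^ 2) atTop
      (𝓝 (∫ t in Ioo 0 (π / k), (k * cos (k * t)) ^ 2)) := by
  obtain ⟨C, hC⟩ := exists_abs_deriv_softThreshold_le
  have hzero (N t) (ht : t ∉ Ioo 0 (π / k)) : deriv (sinTruncation k N) t ^ 2 = 0 := by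
    rw [image_eq_zero_of_notMem_tsupport fun h =>
      ht (tsupport_sinTruncation_subset hk N (tsupport_deriv_subset h)), zero_pow two_ne_zero]
  rw [← funext fun N => setIntegral_eq_integral_of_forall_compl_eq_zero (hzero N)]
  refine tendsto_integral_filter_of_norm_le_const (.of_forall fun N => ?_)
    ⟨(C * k) ^ 2, (eventually_ne_atTop 0).mono fun N hN => ?_⟩ ?_
  · exact ((contDiff_sinTruncation hk N).continuous_deriv_one.pow 2).aestronglyMeasurable
  · refine (ae_restrict_iff' measurableSet_Ioo).2 (.of_forall fun t ht => ?_)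
    rw [deriv_sinTruncation hN ht, norm_pow, norm_mul, norm_mul, norm_eq_abs, norm_eq_abs,
      norm_eq_abs, abs_of_pos hk]
    have hcos : k * |cos (k * t)| ≤ k := mul_le_of_le_one_right hk.le (abs_cos_le_one _)
    have hC0 : 0 ≤ C := (abs_nonneg _).trans (hC 0)
    gcongr
    exact hC _
  · refine (ae_restrict_iff' measurableSet_Ioo).2 (.of_forall fun t ht => ?_)
    refine tendsto_nhds_of_eventually_eq ?_
    filter_upwards [eventually_two_lt_mul_sin hk ht, eventually_ne_atTop 0] with N hsin hN
    rw [deriv_sinTruncation hN ht, deriv_softThreshold_of_two_lt hsin, one_mul]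

lemma setIntegral_mul_cos_sq :
    ∫ t in Ioo 0 (π / k), (k * cos (k * t)) ^ 2 =
      k ^ 2 * ∫ t in Ioo 0 (π / k), sin (k * t) ^ 2 := by
  have hcos_sin : ∫ t in (0)..π, cos t ^ 2 = ∫ t in (0)..π, sin t ^ 2 := by
    simp [integral_cos_sq, integral_sin_sq]
  simp_rw [← integral_Ioc_eq_integral_Ioo,
    ← intervalIntegral.integral_of_le (div_pos pi_pos hk).le, mul_pow,
    intervalIntegral.integral_const_mul]
  rw [intervalIntegral.integral_comp_mul_left (fun t => cos t ^ 2) hk.ne',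
    intervalIntegral.integral_comp_mul_left (fun t => sin t ^ 2) hk.ne', mul_zero,
    mul_div_cancel₀ π hk.ne', hcos_sin]

lemma tendsto_energy_sinTruncation :
    Tendsto (fun N => (∫ t, deriv (sinTruncation k N) t ^ 2) -
      k ^ 2 * ∫ t, sinTruncation k N t ^ 2) atTop (𝓝 0) := by
  have h := (tendsto_integral_deriv_sinTruncation_sq hk).sub
    ((tendsto_integral_sinTruncation_sq hk).const_mul (k ^ 2))
  rwa [setIntegral_mul_cos_sq hk, sub_self] at h

end

/-- The ground state `sin (φ / (2a))` of the Hardy inequality in `straightWedge a`. -/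
def wedgeGroundState (a : ℝ) (x : ℝ × ℝ) : ℝ := sin ((2 * a)⁻¹ * (logPolarCoord x).2)

lemma wedgeGroundState_pos {a : ℝ} (ha : a ∈ Ioc 0 1) {x : ℝ × ℝ} (hx : x ∈ straightWedge a) :
    0 < wedgeGroundState a x := by
  refine sin_mul_pos_of_mem_Ioo (by simpa using ha.1) ?_
  rw [div_inv_eq_mul, mul_left_comm, ← mul_assoc]
  exact (mapsTo_logPolarCoord_straightWedge ha.2 hx).2

lemma continuousOn_wedgeGroundState {a : ℝ} (ha : a ≤ 1) :
    ContinuousOn (wedgeGroundState a) (straightWedge a) :=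
  continuous_sin.comp_continuousOn (continuousOn_const.mul (continuous_snd.comp_continuousOn
    (logPolarCoord.continuousOn.mono (straightWedge_subset_logPolarCoord_source ha))))

lemma integral_deriv_comp_mul_left_sq (f : ℝ → ℝ) (c : ℝ) :
    ∫ t, deriv (fun s => f (c * s)) t ^ 2 = |c| * ∫ t, deriv f t ^ 2 := by
  simp_rw [deriv_comp_mul_left, smul_eq_mul, mul_pow, integral_const_mul]
  rw [Measure.integral_comp_mul_left fun t => deriv f t ^ 2, smul_eq_mul, abs_inv, ← mul_assoc,
    ← sq_abs, sq, mul_self_mul_inv]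

lemma exists_cutoff_integral_deriv_sq_lt (R : ℝ) {ε : ℝ} (hε : 0 < ε) :
    ∃ ψ : ℝ → ℝ, ContDiff ℝ (⊤ : ℕ∞) ψ ∧ HasCompactSupport ψ ∧
      (∀ t, |t| ≤ R → ψ t = 1) ∧ ∫ t, deriv ψ t ^ 2 < ε := by
  obtain ⟨ρ, hρ, hρc, hρ1⟩ : ∃ ρ : ℝ → ℝ, ContDiff ℝ (⊤ : ℕ∞) ρ ∧ HasCompactSupport ρ ∧
      ∀ t, |t| ≤ 1 → ρ t = 1 := by
    let bump : ContDiffBump (0 : ℝ) := ⟨1, 2, one_pos, one_lt_two⟩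
    exact ⟨bump, bump.contDiff, bump.hasCompactSupport, fun t ht =>
      bump.one_of_mem_closedBall (mem_closedBall_zero_iff.2 ht)⟩
  have hlim (b : ℝ) : Tendsto (fun c => c * b) (𝓝[>] 0) (𝓝 0) :=
    ((continuous_mul_const b).tendsto' 0 0 (zero_mul b)).mono_left nhdsWithin_le_nhds
  obtain ⟨c, hc, hcR, hcε⟩ := (eventually_mem_nhdsWithin.and
    (((hlim R).eventually_le_const one_pos).and
      ((hlim (∫ t, deriv ρ t ^ 2)).eventually_lt_const hε))).exists
  replace hc : 0 < c := hc
  have hcomp : HasCompactSupport fun t => ρ (c * t) :=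
    hρc.comp_homeomorph (Homeomorph.mulLeft₀ c hc.ne')
  refine ⟨fun t => ρ (c * t), by fun_prop, hcomp, fun t ht => hρ1 _ ?_, ?_⟩
  · rw [abs_mul, abs_of_pos hc]
    exact (mul_le_mul_of_nonneg_left ht hc.le).trans hcR
  · rwa [integral_deriv_comp_mul_left_sq, abs_of_pos hc]

lemma exists_wedgeLift_mul_hardyForm_lt {a : ℝ} (ha : a ∈ Ioc 0 1) (R : ℝ) {m : ℝ} (hm : 0 < m)
    {ε : ℝ} (hε : 0 < ε) :
    ∃ ψ χ : ℝ → ℝ, ContDiff ℝ (⊤ : ℕ∞) ψ ∧ HasCompactSupport ψ ∧ (∀ t, |t| ≤ R → ψ t = 1) ∧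
      ContDiff ℝ (⊤ : ℕ∞) χ ∧ HasCompactSupport χ ∧ tsupport χ ⊆ Ioo 0 (2 * π * a) ∧
      (∀ φ ∈ Ioo 0 (2 * π * a), m ≤ sin ((2 * a)⁻¹ * φ) → χ φ = sin ((2 * a)⁻¹ * φ)) ∧
      hardyForm a (wedgeLift a fun p => ψ p.1 * χ p.2) < ε := by
  have hk : 0 < (2 * a)⁻¹ := by simpa using ha.1
  have hwidth : π / (2 * a)⁻¹ = 2 * π * a := by rw [div_inv_eq_mul]; ring
  have hksq : 1 / (4 * a ^ 2) = (2 * a)⁻¹ ^ 2 := by rw [inv_pow, one_div]; ring_nf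
  set S := ∫ φ in Ioo 0 (π / (2 * a)⁻¹), sin ((2 * a)⁻¹ * φ) ^ 2
  have hS : 0 ≤ S := integral_nonneg fun φ => sq_nonneg _
  obtain ⟨ψ, hψ, hψc, hψR, hψε⟩ :=
    exists_cutoff_integral_deriv_sq_lt R (div_pos hε (add_pos_of_nonneg_of_pos hS one_pos))
  have hlim := ((tendsto_integral_sinTruncation_sq hk).const_mul (∫ t, deriv ψ t ^ 2)).add
    ((tendsto_energy_sinTruncation hk).const_mul (∫ t, ψ t ^ 2))
  have hlt : (∫ t, deriv ψ t ^ 2) * S + (∫ t, ψ t ^ 2) * 0 < ε := by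
    rw [lt_div_iff₀ (by linarith)] at hψε
    have : 0 ≤ ∫ t, deriv ψ t ^ 2 := integral_nonneg fun t => sq_nonneg _
    linarith
  obtain ⟨N, hNε, hNm⟩ := ((hlim.eventually_lt_const hlt).and
    (eventually_ge_atTop (2 / m))).exists
  have hN : 0 < N := (div_pos two_pos hm).trans_le hNm
  have hsupp := tsupport_sinTruncation_subset hk N
  rw [hwidth] at hsupp
  refine ⟨ψ, sinTruncation (2 * a)⁻¹ N, hψ, hψc, hψR, contDiff_sinTruncation hk N,
    hasCompactSupport_sinTruncation hk N, hsupp, fun φ hφ hmφ => ?_, ?_⟩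
  · refine sinTruncation_of_two_le hN.ne' (hwidth ▸ hφ) ?_
    exact ((div_le_iff₀ hm).1 hNm).trans (mul_le_mul_of_nonneg_left hmφ hN.le)
  · rwa [hardyForm_wedgeLift_mul ha.2 (hψ.of_le (by simp)) hψc (contDiff_sinTruncation hk N)
      (hasCompactSupport_sinTruncation hk N) hsupp, hksq]

lemma exists_hardyForm_lt_of_isCompact {a : ℝ} (ha : a ∈ Ioc 0 1) {K : Set (ℝ × ℝ)}
    (hK : IsCompact K) (hKa : K ⊆ straightWedge a) {ε : ℝ} (hε : 0 < ε) :
    ∃ u : ℝ × ℝ → ℝ, ContDiff ℝ (⊤ : ℕ∞) u ∧ HasCompactSupport u ∧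
      tsupport u ⊆ straightWedge a ∧ EqOn u (wedgeGroundState a) K ∧ hardyForm a u < ε := by
  have hcoord := logPolarCoord.continuousOn.mono
    (hKa.trans (straightWedge_subset_logPolarCoord_source ha.2))
  obtain ⟨R, hR⟩ := hK.exists_bound_of_continuousOn hcoord.fst
  obtain ⟨m, hm, hKm⟩ := hK.exists_forall_le' ((continuousOn_wedgeGroundState ha.2).mono hKa)
    fun x hx => wedgeGroundState_pos ha (hKa hx)
  obtain ⟨ψ, χ, hψ, hψc, hψR, hχ, hχc, hχa, hχm, hform⟩ :=
    exists_wedgeLift_mul_hardyForm_lt ha R hm hε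
  have hfc := hasCompactSupport_mul_prod hψc hχc
  have hfa := (tsupport_mul_prod_subset ψ χ).trans (prod_mono (subset_univ _) hχa)
  refine ⟨_, contDiff_wedgeLift ha.2 hfc hfa (by fun_prop), hasCompactSupport_wedgeLift ha.2 hfc,
    tsupport_wedgeLift_subset ha.2 hfc hfa, fun x hx => ?_, hform⟩
  rw [wedgeLift, indicator_of_mem (hKa hx), Function.comp_apply, hψR _ (hR x hx), one_mul]
  exact hχm _ (mapsTo_logPolarCoord_straightWedge ha.2 (hKa hx)).2 (hKm x hx)

lemma exists_isCompact_subset_support_measure_pos {X : Type*} [TopologicalSpace X]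
    [MeasurableSpace X] {μ : Measure X} [μ.InnerRegular] {E : Type*} [TopologicalSpace E]
    [TopologicalSpace.MetrizableSpace E] [Zero E] {U : Set X} (hU : MeasurableSet U) {f : X → E}
    (hf : AEStronglyMeasurable f (μ.restrict U)) (hne : ¬ f =ᵐ[μ.restrict U] 0) :
    ∃ K ⊆ U ∩ Function.support f, IsCompact K ∧ 0 < μ K := by
  obtain ⟨A, hAf, hA, hAeq⟩ := hf.nullMeasurableSet_support.exists_measurable_subset_ae_eq
  have hpos : 0 < μ (U ∩ A) := by
    rw [inter_comm, ← Measure.restrict_apply hA, measure_congr hAeq, pos_iff_ne_zero]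
    exact hne
  obtain ⟨K, hKA, hK, hμK⟩ := (hU.inter hA).exists_lt_isCompact hpos
  exact ⟨K, hKA.trans (inter_subset_inter_right U hAf), hK, hμK⟩

lemma not_ae_restrict_eq_zero {X Y : Type*} [TopologicalSpace X] [MeasurableSpace X]
    {μ : Measure X} [μ.IsOpenPosMeasure] [TopologicalSpace Y] [T1Space Y] [Zero Y] {f : X → Y}
    {U : Set X} (hf : Continuous f) (hfU : Function.support f ⊆ U) (hne : ∃ x, f x ≠ 0) :
    ¬ f =ᵐ[μ.restrict U] 0 := fun h =>
  hf.isOpen_support.measure_ne_zero μ hne ((Measure.restrict_eq_self μ hfU).symm.trans h)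

theorem hardy_optimal_straight_wedge_general {a : ℝ} (ha : a ∈ Ioc 0 1) {V : ℝ × ℝ → ℝ}
    (hV : LocallyIntegrableOn V (straightWedge a))
    (hVpos : 0 ≤ᵐ[volume.restrict (straightWedge a)] V)
    (hVne : ¬ V =ᵐ[volume.restrict (straightWedge a)] 0) :
    ∃ u : ℝ × ℝ → ℝ, ContDiff ℝ (⊤ : ℕ∞) u ∧ HasCompactSupport u ∧
      tsupport u ⊆ straightWedge a ∧
      hardyForm a u - ∫ x in straightWedge a, V x * u x ^ 2 < 0 := by
  have hΩ := (isOpen_straightWedge ha.2).measurableSet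
  obtain ⟨K, hKV, hK, hμK⟩ :=
    exists_isCompact_subset_support_measure_pos hΩ hV.aestronglyMeasurable hVne
  have hKa : K ⊆ straightWedge a := hKV.trans inter_subset_left
  have hgain : 0 < ∫ x in K, V x * wedgeGroundState a x ^ 2 := by
    rw [setIntegral_pos_iff_support_of_nonneg_ae]
    · refine hμK.trans_le (measure_mono fun x hx => ⟨?_, hx⟩)
      exact mul_ne_zero (hKV hx).2 (pow_ne_zero 2 (wedgeGroundState_pos ha (hKa hx)).ne')
    · filter_upwards [ae_restrict_of_ae_restrict_of_subset hKa hVpos] with x hx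
      exact mul_nonneg hx (sq_nonneg _)
    · exact (hV.integrableOn_compact_subset hKa hK).mul_continuousOn
        (((continuousOn_wedgeGroundState ha.2).mono hKa).pow 2) hK
  obtain ⟨u, hu, huc, hua, huK, hform⟩ := exists_hardyForm_lt_of_isCompact ha hK hKa hgain
  have hint : IntegrableOn (fun x => V x * u x ^ 2) (straightWedge a) := by
    refine ((hV.integrableOn_compact_subset hua huc).mul_continuousOn
      (hu.continuous.pow 2).continuousOn huc).of_forall_sdiff_eq_zero hΩ fun x hx => ?_
    simp [image_eq_zero_of_notMem_tsupport hx.2]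
  have hle : ∫ x in K, V x * wedgeGroundState a x ^ 2 ≤
      ∫ x in straightWedge a, V x * u x ^ 2 :=
    calc ∫ x in K, V x * wedgeGroundState a x ^ 2 = ∫ x in K, V x * u x ^ 2 :=
          setIntegral_congr_fun hK.measurableSet fun x hx => by simp only [huK hx]
      _ ≤ ∫ x in straightWedge a, V x * u x ^ 2 :=
          setIntegral_mono_set hint (hVpos.mono fun x hx => mul_nonneg hx (sq_nonneg _))
            hKa.eventuallyLE
  exact ⟨u, hu, huc, hua, sub_neg.2 (hform.trans_le hle)⟩

/-- **Optimality of the immediate Hardy inequality in the straight wedge.**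
For every nonnegative, not identically vanishing smooth potential `V` compactly supported
in the straight wedge `Ω₀`, there is a smooth compactly supported `u` making the Hardy
quadratic form minus `∫ V u²` negative. -/
theorem hardy_optimal_straight_wedge
    (a : ℝ) (ha : a ∈ Ioc (0:ℝ) 1)
    (V : ℝ × ℝ → ℝ) (hV : ContDiff ℝ (⊤ : ℕ∞) V) (hVc : HasCompactSupport V)
    (hVsupp : tsupport V ⊆ straightWedge a)
    (hVpos : ∀ x, 0 ≤ V x) (hVne : ∃ x, V x ≠ 0) :
    ∃ u : ℝ × ℝ → ℝ, ContDiff ℝ (⊤ : ℕ∞) u ∧ HasCompactSupport u ∧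
      tsupport u ⊆ straightWedge a ∧
      (∫ x in straightWedge a, ((fderiv ℝ u x (1, 0)) ^ 2 + (fderiv ℝ u x (0, 1)) ^ 2))
          - (1 / (4 * a ^ 2)) * (∫ x in straightWedge a, (u x) ^ 2 / enorm2 x ^ 2)
          - (∫ x in straightWedge a, V x * (u x) ^ 2) < 0 :=
  hardy_optimal_straight_wedge_general ha (hV.continuous.locallyIntegrable.locallyIntegrableOn _)
    (.of_forall hVpos)
    (not_ae_restrict_eq_zero hV.continuous ((subset_tsupport V).trans hVsupp) hVne)
end
end

section
/- Let a ∈ (0,1] and let θ ∈ C¹([0,∞)) be such that the support of θ' is compact in ℝ and θ' is not identically zero. Then there exists c > 0 such that for every ψ ∈ C¹_c(U) one has ∫_U [ |∂_rψ(r,φ) − θ'(r) ∂_φψ(r,φ)|² + |∂_φψ(r,φ)|²/r² − (1/(4a²)) |ψ(r,φ)|²/r² ] r dr dφ ≥ c ∫_U |ψ(r,φ)|²/(1 + r² (log r)²) r dr dφ. -/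
open MeasureTheory Real Set

noncomputable section

/-- The half-strip `U = (0,∞) × (0,2πa)` of curvilinear coordinates `(r,φ)`. -/
def wedgeU (a : ℝ) : Set (ℝ × ℝ) := Ioi (0:ℝ) ×ˢ Ioo (0:ℝ) (2 * π * a)

/-! Integrating `div (ψ² V)` shows that `∫ (2 ψ V · ∇ψ + ψ² div V) = 0` for every vector field `V`
on `U`, so completing the square bounds the energy below by `∫ ψ² (div V - |V|²)`, where `|V|` is
the norm dual to the energy. With `k = 1 / (2a)`, the angular field `-k cot (kφ) / r` gives exactly
the Hardy term `k² / r²`. Adding the radial component `α (log r) + β (log r) cot (kφ)` costs terms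
quadratic in `α`, `β` and `β'`, but the shear `θ'` couples `β` to the angular divergence and
produces the linear term `k r θ' β (1 + cot²)`. Near a radius where `θ' ≠ 0`, a small bump `β` of
the sign of `θ'` therefore yields a strictly positive local gain. In the variable `t = log r` this
gain makes the critical Riccati inequality `α' - 2 α² + gain ≥ c / (1 + t²)` solvable on the whole
line, and `c / (1 + log² r)` dominates a multiple of `r² / (1 + r² log² r)`. -/

lemma integrable_of_continuousOn_of_isCompact {X : Type*} [TopologicalSpace X] [T2Space X]
    [MeasurableSpace X] [OpensMeasurableSpace X] {μ : Measure X} [IsFiniteMeasureOnCompacts μ]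
    {f : X → ℝ} {K : Set X} (hK : IsCompact K) (hf : ContinuousOn f K)
    (hf₀ : ∀ p ∉ K, f p = 0) : Integrable f μ :=
  (hf.integrableOn_compact hK).integrable_of_forall_notMem_eq_zero hf₀

/-- `f` is continuous on `U` and has there the continuous line derivative `f'` in the direction `v`:
the regularity that one component of a vector field needs for its part of the divergence to be
integrated by parts against a `C¹` function compactly supported in `U`. The derivative `f'` is data,
and no differentiability in directions other than `v` is asked for. -/
structure HasContLineDerivOn {E : Type*} [NormedAddCommGroup E] [NormedSpace ℝ E]
    (f f' : E → ℝ) (v : E) (U : Set E) : Prop where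
  continuousOn : ContinuousOn f U
  continuousOn_deriv : ContinuousOn f' U
  hasLineDerivAt : ∀ p ∈ U, HasLineDerivAt ℝ f (f' p) p v

section Flux

variable {E : Type*} [NormedAddCommGroup E] [NormedSpace ℝ E] [FiniteDimensional ℝ E]
  [MeasurableSpace E] [BorelSpace E] {μ : Measure E} [μ.IsAddHaarMeasure] {U : Set E} {ψ : E → ℝ}

lemma setIntegral_flux_eq_zero {H H' : E → ℝ} {v : E} (hψ : ContDiff ℝ 1 ψ)
    (hψc : HasCompactSupport ψ) (hψU : tsupport ψ ⊆ U)
    (hH : HasContLineDerivOn H H' v U) :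
    IntegrableOn (fun p => H p * (2 * ψ p * fderiv ℝ ψ p v) + H' p * ψ p ^ 2) U μ ∧
      ∫ p in U, (H p * (2 * ψ p * fderiv ℝ ψ p v) + H' p * ψ p ^ 2) ∂μ = 0 := by
  have hψ₀ : ∀ p ∉ tsupport ψ, ψ p = 0 := fun p hp => image_eq_zero_of_notMem_tsupport hp
  have hsq : tsupport (fun p => ψ p ^ 2) ⊆ tsupport ψ :=
    closure_mono fun p hp => by simpa using hp
  have hsq_deriv (p : E) :
      HasLineDerivAt ℝ (fun p => ψ p ^ 2) (2 * ψ p * fderiv ℝ ψ p v) p v := by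
    simpa using ((hψ.differentiable one_ne_zero p).hasFDerivAt.pow 2).hasLineDerivAt v
  have hdψ : Continuous fun p => 2 * ψ p * fderiv ℝ ψ p v :=
    (hψ.continuous.const_mul 2).mul ((hψ.continuous_fderiv one_ne_zero).clm_apply continuous_const)
  have hψsq : Continuous fun p => ψ p ^ 2 := hψ.continuous.pow 2
  have hint {f g : E → ℝ} (hf : ContinuousOn f U) (hg : Continuous g)
      (hg₀ : ∀ p ∉ tsupport ψ, g p = 0) : Integrable (fun p => f p * g p) μ :=
    integrable_of_continuousOn_of_isCompact hψc ((hf.mono hψU).mul hg.continuousOn)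
      fun p hp => by simp [hg₀ p hp]
  have hHdψ := hint hH.continuousOn hdψ fun p hp => by simp [hψ₀ p hp]
  have hH'ψ := hint hH.continuousOn_deriv hψsq fun p hp => by simp [hψ₀ p hp]
  have hHψ := hint hH.continuousOn hψsq fun p hp => by simp [hψ₀ p hp]
  refine ⟨(hHdψ.add hH'ψ).integrableOn, ?_⟩
  rw [setIntegral_eq_integral_of_forall_compl_eq_zero
    fun p hp => by simp [hψ₀ p fun h => hp (hψU h)], integral_add hHdψ hH'ψ]
  have hparts : ∫ p, H p * (2 * ψ p * fderiv ℝ ψ p v) ∂μ = -∫ p, H' p * ψ p ^ 2 ∂μ :=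
    integral_bilinear_hasLineDerivAt_right_eq_neg_left_of_integrable
      (B := ContinuousLinearMap.mul ℝ ℝ) hH'ψ hHdψ hHψ
      (fun p hp => hH.hasLineDerivAt p (hψU (hsq hp))) fun p _ => hsq_deriv p
  rw [hparts, neg_add_cancel]

-- The dual quadratic form appears because `P x + Q y = P (x - b y) + (Q + b P) y`: complete the
-- square in `x - b y` and in `y`.
lemma neg_flux_le_energy_add_dual {s : ℝ} (hs : 0 < s) (b P Q x y z : ℝ) :
    -(P * (2 * z * x) + Q * (2 * z * y)) ≤
      s * (x - b * y) ^ 2 + y ^ 2 / s + (P ^ 2 / s + s * (Q + b * P) ^ 2) * z ^ 2 := by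
  have hsq₁ : 0 ≤ s * (x - b * y + P / s * z) ^ 2 := by positivity
  have hsq₂ : 0 ≤ (y + s * (Q + b * P) * z) ^ 2 / s := by positivity
  refine sub_nonneg.1 ((add_nonneg hsq₁ hsq₂).trans_eq ?_)
  field_simp
  ring

lemma setIntegral_mul_sq_le_of_flux {w b V ρ P Q P' Q' : E → ℝ} {v₁ v₂ : E} (hU : MeasurableSet U)
    (hψ : ContDiff ℝ 1 ψ) (hψc : HasCompactSupport ψ) (hψU : tsupport ψ ⊆ U)
    (hw : ContinuousOn w U) (hw₀ : ∀ p ∈ U, 0 < w p) (hb : ContinuousOn b U)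
    (hV : ContinuousOn V U) (hρ : ContinuousOn ρ U)
    (hP : HasContLineDerivOn P P' v₁ U) (hQ : HasContLineDerivOn Q Q' v₂ U)
    (hriccati : ∀ p ∈ U,
      ρ p + V p ≤ P' p + Q' p - P p ^ 2 / w p - w p * (Q p + b p * P p) ^ 2) :
    ∫ p in U, ρ p * ψ p ^ 2 ∂μ ≤
      ∫ p in U, (w p * (fderiv ℝ ψ p v₁ - b p * fderiv ℝ ψ p v₂) ^ 2
        + fderiv ℝ ψ p v₂ ^ 2 / w p - V p * ψ p ^ 2) ∂μ := by
  have hdψ (v : E) : Continuous fun p => fderiv ℝ ψ p v :=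
    (hψ.continuous_fderiv one_ne_zero).clm_apply continuous_const
  have hψ₀ : ∀ p ∉ tsupport ψ, ψ p = 0 := fun p hp => image_eq_zero_of_notMem_tsupport hp
  have hdψ₀ : ∀ p ∉ tsupport ψ, fderiv ℝ ψ p = 0 := fun _ => fderiv_of_notMem_tsupport ℝ
  obtain ⟨hPint, hP₀⟩ := setIntegral_flux_eq_zero (μ := μ) hψ hψc hψU hP
  obtain ⟨hQint, hQ₀⟩ := setIntegral_flux_eq_zero (μ := μ) hψ hψc hψU hQ
  have hρint : IntegrableOn (fun p => ρ p * ψ p ^ 2) U μ :=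
    (integrable_of_continuousOn_of_isCompact hψc
      ((hρ.mono hψU).mul (hψ.continuous.pow 2).continuousOn)
      fun p hp => by simp [hψ₀ p hp]).integrableOn
  have henergy : IntegrableOn (fun p => w p * (fderiv ℝ ψ p v₁ - b p * fderiv ℝ ψ p v₂) ^ 2
      + fderiv ℝ ψ p v₂ ^ 2 / w p - V p * ψ p ^ 2) U μ := by
    refine (integrable_of_continuousOn_of_isCompact hψc (ContinuousOn.mono ?_ hψU)
      fun p hp => by simp [hψ₀ p hp, hdψ₀ p hp]).integrableOn
    have hd₁ := (hdψ v₁).continuousOn (s := U)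
    have hd₂ := (hdψ v₂).continuousOn (s := U)
    exact ((hw.mul ((hd₁.sub (hb.mul hd₂)).pow 2)).add
      ((hd₂.pow 2).div hw fun p hp => (hw₀ p hp).ne')).sub
      (hV.mul (hψ.continuous.continuousOn.pow 2))
  have hle : ∀ p ∈ U, ρ p * ψ p ^ 2 ≤
      (w p * (fderiv ℝ ψ p v₁ - b p * fderiv ℝ ψ p v₂) ^ 2
        + fderiv ℝ ψ p v₂ ^ 2 / w p - V p * ψ p ^ 2)
      + ((P p * (2 * ψ p * fderiv ℝ ψ p v₁) + P' p * ψ p ^ 2)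
        + (Q p * (2 * ψ p * fderiv ℝ ψ p v₂) + Q' p * ψ p ^ 2)) := by
    intro p hp
    have hgap := mul_le_mul_of_nonneg_right (hriccati p hp) (sq_nonneg (ψ p))
    linarith [neg_flux_le_energy_add_dual (hw₀ p hp) (b p) (P p) (Q p)
      (fderiv ℝ ψ p v₁) (fderiv ℝ ψ p v₂) (ψ p)]
  have hmono := setIntegral_mono_on hρint (henergy.add (hPint.add hQint)) hU hle
  rwa [integral_add' henergy (hPint.add hQint), integral_add' hPint hQint, hP₀, hQ₀, add_zero,
    add_zero] at hmono

end Flux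

lemma hasDerivAt_div_sq_add_sq {L : ℝ} (hL : L ≠ 0) (t : ℝ) :
    HasDerivAt (fun s => s / (L ^ 2 + s ^ 2)) ((L ^ 2 - t ^ 2) / (L ^ 2 + t ^ 2) ^ 2) t := by
  have hden : HasDerivAt (fun s => L ^ 2 + s ^ 2) (2 * t) t := by
    simpa using (hasDerivAt_pow 2 t).const_add (L ^ 2)
  refine ((hasDerivAt_id' t).div hden (by positivity)).congr_deriv ?_
  ring

lemma sq_add_sub_sq_le (L t₀ t : ℝ) :
    L ^ 2 + (t - t₀) ^ 2 ≤ (L ^ 2 + 2 * t₀ ^ 2 + 2) * (1 + t ^ 2) := by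
  linarith [sq_nonneg (t + t₀), mul_nonneg (add_nonneg (sq_nonneg L)
    (mul_nonneg zero_le_two (sq_nonneg t₀))) (sq_nonneg t)]

lemma div_le_riccati_add_of_local_gain {δ κ L t g : ℝ} (hL : 0 < L) (hδ : 0 < δ)
    (hδ₁ : δ ≤ 1 / 4) (hδ₂ : δ ≤ κ * L ^ 2 / 2) (hg : 0 ≤ g) (hgκ : |t| ≤ 2 * L → κ ≤ g) :
    δ / 5 / (L ^ 2 + t ^ 2) ≤
      -δ * ((L ^ 2 - t ^ 2) / (L ^ 2 + t ^ 2) ^ 2) - 2 * (-δ * (t / (L ^ 2 + t ^ 2))) ^ 2 + g := by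
  have hgain : 6 / 5 * (δ * L ^ 2) ≤ 3 / 10 * (δ * t ^ 2) + g * (L ^ 2 + t ^ 2) ^ 2 := by
    rcases le_or_gt |t| (2 * L) with ht | ht
    · have hden : L ^ 2 * L ^ 2 ≤ (L ^ 2 + t ^ 2) ^ 2 := by
        rw [← sq]
        gcongr
        exact le_add_of_nonneg_right (sq_nonneg t)
      have hδL : δ * L ^ 2 ≤ κ * L ^ 2 / 2 * L ^ 2 := by gcongr
      have := mul_le_mul (hgκ ht) hden (by positivity) hg
      have : 0 ≤ δ * t ^ 2 := by positivity
      have : 0 ≤ δ * L ^ 2 := by positivity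
      linarith
    · have hsq : (2 * L) ^ 2 ≤ t ^ 2 := by
        rw [← sq_abs t]
        gcongr
      have := mul_le_mul_of_nonneg_left hsq hδ.le
      have : 0 ≤ g * (L ^ 2 + t ^ 2) ^ 2 := by positivity
      linarith
  have hδt : 2 * (δ * δ * t ^ 2) ≤ 1 / 2 * (δ * t ^ 2) := by
    have : δ * δ * t ^ 2 ≤ δ * (1 / 4) * t ^ 2 := by gcongr
    linarith
  rw [← sub_nonneg]
  have hnum : 0 ≤ 3 / 10 * (δ * t ^ 2) + g * (L ^ 2 + t ^ 2) ^ 2 - 6 / 5 * (δ * L ^ 2)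
      + (1 / 2 * (δ * t ^ 2) - 2 * (δ * δ * t ^ 2)) := by linarith
  refine (div_nonneg hnum (sq_nonneg (L ^ 2 + t ^ 2))).trans_eq ?_
  field_simp
  ring

lemma exists_riccati_subsolution_of_local_gain {κ w : ℝ} (hκ : 0 < κ) (hw : 0 < w) (t₀ : ℝ) :
    ∃ α : ℝ → ℝ, ContDiff ℝ 1 α ∧ ∃ c > 0, ∀ t g, 0 ≤ g → (|t - t₀| ≤ w → κ ≤ g) →
      c / (1 + t ^ 2) ≤ deriv α t - 2 * α t ^ 2 + g := by
  -- With `τ = t - t₀` and `α = -δ τ / (L² + τ²)`: for large `|τ|`, `α' ≈ δ / τ²` beats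
  -- `2 α² ≈ 2 δ² / τ²`, and for small `|τ|` the gain absorbs `α' ≈ -δ / L²`.
  set L := w / 2
  have hL : 0 < L := half_pos hw
  obtain ⟨δ, hδ, hδ₁, hδ₂⟩ : ∃ δ > 0, δ ≤ 1 / 4 ∧ δ ≤ κ * L ^ 2 / 2 :=
    ⟨min (1 / 4) (κ * L ^ 2 / 2), by positivity, min_le_left _ _, min_le_right _ _⟩
  have hα (t : ℝ) : HasDerivAt (fun s => -δ * ((s - t₀) / (L ^ 2 + (s - t₀) ^ 2)))
      (-δ * ((L ^ 2 - (t - t₀) ^ 2) / (L ^ 2 + (t - t₀) ^ 2) ^ 2)) t :=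
    ((hasDerivAt_div_sq_add_sq hL.ne' (t - t₀)).comp_sub_const t t₀).const_mul (-δ)
  have hden (t : ℝ) : L ^ 2 + (t - t₀) ^ 2 ≠ 0 := by positivity
  refine ⟨fun t => -δ * ((t - t₀) / (L ^ 2 + (t - t₀) ^ 2)), by fun_prop (disch := exact hden _),
    δ / 5 / (L ^ 2 + 2 * t₀ ^ 2 + 2), by positivity, fun t g hg hgκ => ?_⟩
  rw [(hα t).deriv]
  calc δ / 5 / (L ^ 2 + 2 * t₀ ^ 2 + 2) / (1 + t ^ 2)
      = δ / 5 / ((L ^ 2 + 2 * t₀ ^ 2 + 2) * (1 + t ^ 2)) := div_div _ _ _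
    _ ≤ δ / 5 / (L ^ 2 + (t - t₀) ^ 2) := by
      gcongr
      exact sq_add_sub_sq_le L t₀ t
    _ ≤ _ := div_le_riccati_add_of_local_gain hL hδ hδ₁ hδ₂ hg fun ht =>
      hgκ (ht.trans_eq (mul_div_cancel₀ w two_ne_zero))

lemma le_shear_gain_of_sq_div_two_le {b₀ b ε m M x y d : ℝ} (hε : 0 ≤ ε) (hm : 0 ≤ m)
    (hM : 0 ≤ M) (hεM : ε * (8 + 16 * (m * M)) ≤ 1) (hb : b₀ ^ 2 / 2 ≤ b₀ * b)
    (hy : y ^ 2 ≤ 1) (hd : d ^ 2 ≤ M) :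
    ε * (b₀ ^ 2 / 4) * y ^ 2 ≤
      b * (ε * b₀ * y ^ 2) * (1 + x ^ 2) - 2 * (ε * b₀ * y ^ 2 * x) ^ 2
        - m * (ε * b₀ * (2 * y * d)) ^ 2 := by
  have hεmM : 0 ≤ ε * (m * M) := by positivity
  have hgain : b₀ ^ 2 / 2 * (1 + x ^ 2) ≤ b₀ * b * (1 + x ^ 2) := by gcongr
  have hcot : ε * b₀ ^ 2 * y ^ 2 * x ^ 2 ≤ 1 / 8 * b₀ ^ 2 * 1 * x ^ 2 := by
    have : ε ≤ 1 / 8 := by linarith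
    gcongr
  have hderiv : ε * (m * d ^ 2) * b₀ ^ 2 ≤ 1 / 16 * b₀ ^ 2 := by
    have : ε * (m * d ^ 2) ≤ ε * (m * M) := by gcongr
    gcongr
    linarith
  have hbracket : 0 ≤ b₀ * b * (1 + x ^ 2) - 2 * (ε * b₀ ^ 2 * y ^ 2 * x ^ 2)
      - 4 * (ε * (m * d ^ 2) * b₀ ^ 2) - b₀ ^ 2 / 4 := by
    have : 0 ≤ b₀ ^ 2 * x ^ 2 := by positivity
    linarith
  have hεy : 0 ≤ ε * y ^ 2 := by positivity
  linarith [mul_nonneg hεy hbracket]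

lemma exists_local_shear_gain {B : ℝ → ℝ} (hB : Continuous B) {t₀ m : ℝ} (hB₀ : B t₀ ≠ 0)
    (hm : 0 ≤ m) :
    ∃ β : ℝ → ℝ, ContDiff ℝ 1 β ∧ ∃ κ > 0, ∃ w > 0, ∀ t x,
      0 ≤ B t * β t * (1 + x ^ 2) - 2 * (β t * x) ^ 2 - m * deriv β t ^ 2 ∧
      (|t - t₀| ≤ w →
        κ ≤ B t * β t * (1 + x ^ 2) - 2 * (β t * x) ^ 2 - m * deriv β t ^ 2) := by
  have hB₀sq : 0 < B t₀ ^ 2 := by positivity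
  obtain ⟨w, hw, hnear⟩ : ∃ w > 0, ∀ t ∈ Metric.ball t₀ w, B t₀ ^ 2 / 2 < B t₀ * B t :=
    Metric.eventually_nhds_iff_ball.1
      ((hB.const_mul (B t₀)).continuousAt.eventually (lt_mem_nhds (by linarith)))
  let f : ContDiffBump t₀ := ⟨w / 2, w, half_pos hw, half_lt_self hw⟩
  have hf : ContDiff ℝ 1 f := f.contDiff
  obtain ⟨M, hM⟩ : ∃ M, ∀ t, ‖deriv f t‖ ≤ M :=
    f.hasCompactSupport.deriv.exists_bound_of_continuous (hf.continuous_deriv le_rfl)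
  set ε := 1 / (8 + 16 * (m * M ^ 2))
  have hε : 0 < ε := by positivity
  have hβ (t : ℝ) : deriv (fun t => ε * B t₀ * f t ^ 2) t = ε * B t₀ * (2 * f t * deriv f t) := by
    simpa using (((hf.differentiable one_ne_zero t).hasDerivAt.pow 2).const_mul (ε * B t₀)).deriv
  have hgain (t x : ℝ) : ε * (B t₀ ^ 2 / 4) * f t ^ 2 ≤
      B t * (ε * B t₀ * f t ^ 2) * (1 + x ^ 2) - 2 * (ε * B t₀ * f t ^ 2 * x) ^ 2
        - m * (ε * B t₀ * (2 * f t * deriv f t)) ^ 2 := by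
    by_cases ht : t ∈ Metric.ball t₀ w
    · exact le_shear_gain_of_sq_div_two_le hε.le hm (sq_nonneg M)
        (div_mul_cancel₀ 1 (by positivity)).le (hnear t ht).le (pow_le_one₀ f.nonneg f.le_one)
        (sq_le_sq' (abs_le.1 (hM t)).1 (abs_le.1 (hM t)).2)
    · simp [f.zero_of_le_dist (not_lt.1 ht)]
  refine ⟨fun t => ε * B t₀ * f t ^ 2, by fun_prop, ε * (B t₀ ^ 2 / 4), by positivity,
    w / 2, half_pos hw, fun t x => ?_⟩
  rw [hβ]
  refine ⟨le_trans (by positivity) (hgain t x), fun ht => ?_⟩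
  simpa [f.one_of_mem_closedBall (x := t) ht] using hgain t x

lemma exists_log_riccati_subsolution {B : ℝ → ℝ} (hB : Continuous B) {t₀ m : ℝ}
    (hB₀ : B t₀ ≠ 0) (hm : 0 ≤ m) :
    ∃ c > 0, ∃ α β : ℝ → ℝ, ContDiff ℝ 1 α ∧ ContDiff ℝ 1 β ∧ ∀ t x,
      c / (1 + t ^ 2) ≤
        deriv α t + B t * β t * (1 + x ^ 2) - (α t + β t * x) ^ 2 - m * deriv β t ^ 2 := by
  obtain ⟨β, hβ, κ, hκ, w, hw, hgain⟩ := exists_local_shear_gain hB hB₀ hm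
  obtain ⟨α, hα, c, hc, hα_le⟩ := exists_riccati_subsolution_of_local_gain hκ hw t₀
  refine ⟨c, hc, α, β, hα, hβ, fun t x => (hα_le t _ (hgain t x).1 (hgain t x).2).trans ?_⟩
  linarith [add_sq_le (a := α t) (b := β t * x)]

lemma sq_div_le_div_one_add_log_sq {r : ℝ} (hr : 0 < r) :
    r ^ 2 / (1 + r ^ 2 * log r ^ 2) ≤ (2 + exp 1 ^ 2) / (1 + log r ^ 2) := by
  have hsq : r ^ 2 ≤ exp 1 ^ 2 + r ^ 2 * log r ^ 2 := by
    rcases le_total r (exp 1) with h | h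
    · exact le_add_of_le_of_nonneg (by gcongr) (by positivity)
    · have hlog : 1 ≤ log r ^ 2 := one_le_pow₀ ((le_log_iff_exp_le hr).2 h)
      exact le_add_of_nonneg_of_le (by positivity) (le_mul_of_one_le_right (by positivity) hlog)
  rw [div_le_div_iff₀ (by positivity) (by positivity)]
  have : 0 ≤ exp 1 ^ 2 * (r ^ 2 * log r ^ 2) := by positivity
  linarith

lemma hasDerivAt_cot {x : ℝ} (hx : sin x ≠ 0) : HasDerivAt cot (-(1 + cot x ^ 2)) x := by
  have hcot : cot = fun y => cos y / sin y := funext cot_eq_cos_div_sin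
  rw [hcot]
  refine ((hasDerivAt_cos x).div (hasDerivAt_sin x) hx).congr_deriv ?_
  field_simp
  ring

section ProdLineDeriv

variable {𝕜 E F : Type*} [NontriviallyNormedField 𝕜] [AddCommGroup E] [Module 𝕜 E]
  [NormedAddCommGroup F] [NormedSpace 𝕜 F] {f' : F}

lemma hasLineDerivAt_one_zero {f : 𝕜 × E → F} {p : 𝕜 × E}
    (hf : HasDerivAt (fun s => f (s, p.2)) f' p.1) : HasLineDerivAt 𝕜 f f' p (1, 0) := by
  have := HasDerivAt.comp_const_add p.1 0 ((add_zero p.1).symm ▸ hf)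
  simpa [HasLineDerivAt, Prod.add_def] using this

lemma hasLineDerivAt_zero_one {f : E × 𝕜 → F} {p : E × 𝕜}
    (hf : HasDerivAt (fun s => f (p.1, s)) f' p.2) : HasLineDerivAt 𝕜 f f' p (0, 1) := by
  have := HasDerivAt.comp_const_add p.2 0 ((add_zero p.2).symm ▸ hf)
  simpa [HasLineDerivAt, Prod.add_def] using this

end ProdLineDeriv

lemma continuousOn_hardy_weight {U : Set (ℝ × ℝ)} (hr : ∀ p ∈ U, p.1 ≠ 0) (c : ℝ) :
    ContinuousOn (fun p => c * (p.1 / (1 + p.1 ^ 2 * log p.1 ^ 2))) U :=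
  (continuousOn_fst.div
    (((continuousOn_fst.pow 2).mul ((continuousOn_fst.log hr).pow 2)).const_add 1)
    fun p _ => ne_of_gt (show 0 < 1 + p.1 ^ 2 * log p.1 ^ 2 by positivity)).const_mul c

lemma continuousOn_cot_snd {k : ℝ} {U : Set (ℝ × ℝ)} (hφ : ∀ p ∈ U, sin (k * p.2) ≠ 0) :
    ContinuousOn (fun p => cot (k * p.2)) U := by
  simp only [cot_eq_cos_div_sin]
  exact ContinuousOn.div (by fun_prop) (by fun_prop) hφ

/-- The radial component of the trial vector field, for a wedge of opening angle `π / k`. The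
coefficients `α`, `β` are functions of `log r`. -/
def radialFlux (k : ℝ) (α β : ℝ → ℝ) (p : ℝ × ℝ) : ℝ :=
  α (log p.1) + β (log p.1) * cot (k * p.2)

/-- The angular component of the trial vector field for the shear `b`. Its first summand is the
`cot` field of the unsheared Hardy inequality, corrected so that the `β' cot` term in the
divergence cancels against the dual energy. -/
def angularFlux (k : ℝ) (b α β : ℝ → ℝ) (p : ℝ × ℝ) : ℝ :=
  -(k * cot (k * p.2) + deriv β (log p.1) / (2 * k)) / p.1 - b p.1 * radialFlux k α β p

section Fluxes

variable {k : ℝ} {b α β : ℝ → ℝ} {U : Set (ℝ × ℝ)}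

lemma hasContLineDerivOn_radialFlux (hα : ContDiff ℝ 1 α) (hβ : ContDiff ℝ 1 β)
    (hr : ∀ p ∈ U, p.1 ≠ 0) (hφ : ∀ p ∈ U, sin (k * p.2) ≠ 0) :
    HasContLineDerivOn (radialFlux k α β)
      (fun p => (deriv α (log p.1) + deriv β (log p.1) * cot (k * p.2)) / p.1) (1, 0) U where
  continuousOn := (hα.continuous.comp_continuousOn (continuousOn_fst.log hr)).add
    ((hβ.continuous.comp_continuousOn (continuousOn_fst.log hr)).mul (continuousOn_cot_snd hφ))
  continuousOn_deriv :=
    (((hα.continuous_deriv le_rfl).comp_continuousOn (continuousOn_fst.log hr)).add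
      (((hβ.continuous_deriv le_rfl).comp_continuousOn (continuousOn_fst.log hr)).mul
        (continuousOn_cot_snd hφ))).div continuousOn_fst hr
  hasLineDerivAt p hp := by
    have hcomp {f : ℝ → ℝ} (hf : ContDiff ℝ 1 f) :
        HasDerivAt (fun s => f (log s)) (deriv f (log p.1) * p.1⁻¹) p.1 :=
      (hf.differentiable one_ne_zero _).hasDerivAt.comp p.1 (hasDerivAt_log (hr p hp))
    have hradial : HasDerivAt (fun s => α (log s) + β (log s) * cot (k * p.2))
        ((deriv α (log p.1) + deriv β (log p.1) * cot (k * p.2)) / p.1) p.1 := by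
      refine ((hcomp hα).add ((hcomp hβ).mul_const _)).congr_deriv ?_
      ring
    exact hasLineDerivAt_one_zero hradial

lemma hasContLineDerivOn_angularFlux (hα : ContDiff ℝ 1 α) (hβ : ContDiff ℝ 1 β)
    (hb : ContinuousOn (fun p => b p.1) U) (hr : ∀ p ∈ U, p.1 ≠ 0)
    (hφ : ∀ p ∈ U, sin (k * p.2) ≠ 0) :
    HasContLineDerivOn (angularFlux k b α β)
      (fun p => k * (k / p.1 + b p.1 * β (log p.1)) * (1 + cot (k * p.2) ^ 2)) (0, 1) U where
  continuousOn :=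
    ((((continuousOn_cot_snd hφ).const_mul k).add
      (((hβ.continuous_deriv le_rfl).comp_continuousOn (continuousOn_fst.log hr)).div_const
        (2 * k))).neg.div continuousOn_fst hr).sub
      (hb.mul (hasContLineDerivOn_radialFlux hα hβ hr hφ).continuousOn)
  continuousOn_deriv :=
    (((continuousOn_const.div continuousOn_fst hr).add
      (hb.mul (hβ.continuous.comp_continuousOn (continuousOn_fst.log hr)))).const_mul k).mul
      (((continuousOn_cot_snd hφ).pow 2).const_add 1)
  hasLineDerivAt p hp := by
    have hcot : HasDerivAt (fun s => cot (k * s)) (-(1 + cot (k * p.2) ^ 2) * k) p.2 :=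
      (hasDerivAt_cot (hφ p hp)).comp p.2 (by simpa using (hasDerivAt_id p.2).const_mul k)
    have hangular : HasDerivAt (fun s => -(k * cot (k * s) + deriv β (log p.1) / (2 * k)) / p.1
          - b p.1 * (α (log p.1) + β (log p.1) * cot (k * s)))
        (k * (k / p.1 + b p.1 * β (log p.1)) * (1 + cot (k * p.2) ^ 2)) p.2 := by
      refine ((((hcot.const_mul k).add_const _).neg.div_const p.1).sub
        (((hcot.const_mul _).const_add _).const_mul (b p.1))).congr_deriv ?_
      ring
    exact hasLineDerivAt_zero_one hangular

lemma flux_riccati_eq (hk : k ≠ 0) {p : ℝ × ℝ} (hp : p.1 ≠ 0) :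
    (deriv α (log p.1) + deriv β (log p.1) * cot (k * p.2)) / p.1
        + k * (k / p.1 + b p.1 * β (log p.1)) * (1 + cot (k * p.2) ^ 2)
        - radialFlux k α β p ^ 2 / p.1
        - p.1 * (angularFlux k b α β p + b p.1 * radialFlux k α β p) ^ 2 =
      (deriv α (log p.1) + k * p.1 * b p.1 * β (log p.1) * (1 + cot (k * p.2) ^ 2)
        - (α (log p.1) + β (log p.1) * cot (k * p.2)) ^ 2
        - 1 / (4 * k ^ 2) * deriv β (log p.1) ^ 2 + k ^ 2) / p.1 := by
  simp only [angularFlux, radialFlux]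
  field_simp
  ring

lemma exists_hardy_flux (hk : 0 < k) (hb : ContinuousOn b (Ioi 0)) {r₀ : ℝ} (hr₀ : 0 < r₀)
    (hbr₀ : b r₀ ≠ 0) :
    ∃ c > 0, ∃ α β : ℝ → ℝ, ContDiff ℝ 1 α ∧ ContDiff ℝ 1 β ∧ ∀ p : ℝ × ℝ, 0 < p.1 →
      c * (p.1 / (1 + p.1 ^ 2 * log p.1 ^ 2)) + k ^ 2 / p.1 ≤
        (deriv α (log p.1) + deriv β (log p.1) * cot (k * p.2)) / p.1
          + k * (k / p.1 + b p.1 * β (log p.1)) * (1 + cot (k * p.2) ^ 2)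
          - radialFlux k α β p ^ 2 / p.1
          - p.1 * (angularFlux k b α β p + b p.1 * radialFlux k α β p) ^ 2 := by
  have hB : Continuous fun t => k * exp t * b (exp t) :=
    (continuous_exp.const_mul k).mul (hb.comp_continuous continuous_exp exp_pos)
  obtain ⟨c, hc, α, β, hα, hβ, hsub⟩ := exists_log_riccati_subsolution hB (t₀ := log r₀)
    (m := 1 / (4 * k ^ 2)) (by simp [exp_log hr₀, hk.ne', hr₀.ne', hbr₀]) (by positivity)
  refine ⟨c / (2 + exp 1 ^ 2), by positivity, α, β, hα, hβ, fun p hp => ?_⟩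
  rw [flux_riccati_eq hk.ne' hp.ne', le_div_iff₀ hp]
  have hweight : c / (2 + exp 1 ^ 2) * (p.1 ^ 2 / (1 + p.1 ^ 2 * log p.1 ^ 2)) ≤
      c / (1 + log p.1 ^ 2) := by
    refine (mul_le_mul_of_nonneg_left (sq_div_le_div_one_add_log_sq hp)
      (by positivity)).trans_eq ?_
    field_simp
  have hsub_p := hsub (log p.1) (cot (k * p.2))
  rw [exp_log hp] at hsub_p
  calc (c / (2 + exp 1 ^ 2) * (p.1 / (1 + p.1 ^ 2 * log p.1 ^ 2)) + k ^ 2 / p.1) * p.1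
      = c / (2 + exp 1 ^ 2) * (p.1 ^ 2 / (1 + p.1 ^ 2 * log p.1 ^ 2)) + k ^ 2 := by
        field_simp
    _ ≤ _ := by linarith

end Fluxes

lemma sin_pos_of_mem_wedgeU {a : ℝ} (ha : 0 < a) {p : ℝ × ℝ} (hp : p ∈ wedgeU a) :
    0 < sin (1 / (2 * a) * p.2) := by
  refine sin_pos_of_pos_of_lt_pi (mul_pos (by positivity) hp.2.1) ?_
  calc 1 / (2 * a) * p.2 < 1 / (2 * a) * (2 * π * a) := by
        gcongr
        exact hp.2.2
    _ = π := by field_simp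

theorem improved_hardy_curvilinear_general {a : ℝ} (ha : 0 < a) {θ θ' : ℝ → ℝ}
    (hderiv : ∀ r ∈ Ioi (0 : ℝ), HasDerivAt θ (θ' r) r)
    (hcont : ContinuousOn θ' (Ioi 0)) (hne : ∃ r ∈ Ioi (0 : ℝ), θ' r ≠ 0) :
    ∃ c > 0, ∀ ψ : ℝ × ℝ → ℝ,
      ContDiff ℝ 1 ψ → HasCompactSupport ψ → tsupport ψ ⊆ wedgeU a →
      (∫ p in wedgeU a,
          ((fderiv ℝ ψ p (1, 0) - θ' p.1 * fderiv ℝ ψ p (0, 1)) ^ 2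
            + (fderiv ℝ ψ p (0, 1)) ^ 2 / p.1 ^ 2
            - (1 / (4 * a ^ 2)) * (ψ p) ^ 2 / p.1 ^ 2) * p.1)
        ≥ c * ∫ p in wedgeU a,
            (ψ p) ^ 2 / (1 + p.1 ^ 2 * (Real.log p.1) ^ 2) * p.1 := by
  obtain ⟨r₀, hr₀, hθr₀⟩ := hne
  have hr : ∀ p ∈ wedgeU a, 0 < p.1 := fun p hp => hp.1
  have hφ : ∀ p ∈ wedgeU a, sin (1 / (2 * a) * p.2) ≠ 0 := fun p hp =>
    (sin_pos_of_mem_wedgeU ha hp).ne'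
  have hr_ne : ∀ p ∈ wedgeU a, p.1 ≠ 0 := fun p hp => (hr p hp).ne'
  have hθ : ContinuousOn (fun p : ℝ × ℝ => θ' p.1) (wedgeU a) := hcont.comp continuousOn_fst hr
  have hmeas : MeasurableSet (wedgeU a) := measurableSet_Ioi.prod measurableSet_Ioo
  obtain ⟨c, hc, α, β, hα, hβ, hriccati⟩ :=
    exists_hardy_flux (k := 1 / (2 * a)) (by positivity) hcont hr₀ hθr₀
  refine ⟨c, hc, fun ψ hψ hψc hψU => ?_⟩
  have hhardy := setIntegral_mul_sq_le_of_flux (μ := volume)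
    (V := fun p => (1 / (2 * a)) ^ 2 / p.1) hmeas hψ hψc hψU continuousOn_fst hr hθ
    (continuousOn_const.div continuousOn_fst hr_ne) (continuousOn_hardy_weight hr_ne c)
    (hasContLineDerivOn_radialFlux hα hβ hr_ne hφ)
    (hasContLineDerivOn_angularFlux hα hβ hθ hr_ne hφ) fun p hp => hriccati p (hr p hp)
  rw [ge_iff_le, ← integral_const_mul]
  refine (le_of_eq (setIntegral_congr_fun hmeas fun p _ => ?_)).trans
    (hhardy.trans_eq (setIntegral_congr_fun hmeas fun p hp => ?_))
  · ring
  · have := hr_ne p hp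
    field_simp
    ring

/-- **Improved Hardy inequality in curvilinear coordinates.**
If `a ∈ (0,1]`, `θ ∈ C¹([0,∞))`, `θ'` has compact support and is not identically zero,
then there is `c > 0` such that for every `ψ ∈ C¹_c(U)`,
`∫_U [ |∂_rψ - θ'∂_φψ|² + |∂_φψ|²/r² - (1/(4a²)) ψ²/r² ] r dr dφ
  ≥ c ∫_U ψ²/(1 + r² log² r) r dr dφ`. -/
theorem improved_hardy_curvilinear
    (a : ℝ) (ha : a ∈ Ioc (0:ℝ) 1)
    (θ θ' : ℝ → ℝ)
    (hderiv : ∀ r ∈ Ici (0:ℝ), HasDerivWithinAt θ (θ' r) (Ici 0) r)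
    (hcont : ContinuousOn θ' (Ici 0))
    (hsupp : HasCompactSupport θ')
    (hne : ∃ r ∈ Ioi (0:ℝ), θ' r ≠ 0) :
    ∃ c > 0, ∀ ψ : ℝ × ℝ → ℝ,
      ContDiff ℝ 1 ψ → HasCompactSupport ψ → tsupport ψ ⊆ wedgeU a →
      (∫ p in wedgeU a,
          ((fderiv ℝ ψ p (1, 0) - θ' p.1 * fderiv ℝ ψ p (0, 1)) ^ 2
            + (fderiv ℝ ψ p (0, 1)) ^ 2 / p.1 ^ 2
            - (1 / (4 * a ^ 2)) * (ψ p) ^ 2 / p.1 ^ 2) * p.1)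
        ≥ c * ∫ p in wedgeU a,
            (ψ p) ^ 2 / (1 + p.1 ^ 2 * (Real.log p.1) ^ 2) * p.1 :=
  improved_hardy_curvilinear_general ha.1
    (fun r hr => (hderiv r (mem_Ici_of_Ioi hr)).hasDerivAt (Ici_mem_nhds hr))
    (hcont.mono Ioi_subset_Ici_self) hne
end
end
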